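/- arXiv:1609.04842 — 2 statements merged into one kernel-verified Lean document; each statement's English description precedes it below -/
import Mathlib

section
/- Let R be a commutative noetherian ring, M a finitely generated R-module with R ∈ add M that is d-torsionfree, and X a finitely generated R-module with grade_R X > c for some 0 ≤ c < d. If End_R(M) and End_R(X) have finite global dimension, then End_R(M ⊕ Ω^c X) has global dimension at most 2·gldim End_R(M) + gldim End_R(X) + 1; in particular it is finite. -/
open CategoryTheory
universe u
noncomputable section

/-- A linear map factors through a projective module. -/
def FactorsThroughProjective {R : Type u} [Ring R] {M N : Type u}
    [AddCommGroup M] [AddCommGroup N] [Module R M] [Module R N] (f : M →ₗ[R] N) : Prop :=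
  ∃ (P : Type u) (_ : AddCommGroup P) (_ : Module R P), Module.Projective R P ∧
    ∃ (g : M →ₗ[R] P) (h : P →ₗ[R] N), h.comp g = f

/-- `Ext^i_R(X, Y) = 0`. -/
def extZero (R : Type u) [CommRing R] (i : ℕ) (X Y : ModuleCat.{u} R) : Prop :=
  Subsingleton (((Ext R (ModuleCat.{u} R) i).obj (Opposite.op X)).obj Y)

/-- `Y` is an `n`-th syzygy of `N` (via finitely generated projective modules). -/
def IsSyzygy (R : Type u) [CommRing R] : ℕ → ModuleCat.{u} R → ModuleCat.{u} R → Prop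
  | 0, Y, N => Nonempty (Y ≅ N)
  | n+1, Y, N => ∃ (P K : ModuleCat.{u} R) (i : Y ⟶ P) (p : P ⟶ K),
      Projective P ∧ Module.Finite R P ∧ Function.Injective i ∧ Function.Surjective p ∧
      Function.Exact i p ∧ IsSyzygy R n K N

/-- projective dimension at most `n` -/
def pdLE (A : Type u) [Ring A] : ℕ → ModuleCat.{u} A → Prop
  | 0, M => Projective M
  | n+1, M => Projective M ∨ ∃ (K P : ModuleCat.{u} A) (i : K ⟶ P) (p : P ⟶ M),
      Projective P ∧ Function.Injective i ∧ Function.Surjective p ∧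
      Function.Exact i p ∧ pdLE A n K

/-- global dimension at most `n` -/
def gldimLE (A : Type u) [Ring A] (n : ℕ) : Prop := ∀ M : ModuleCat.{u} A, pdLE A n M

/-- `M` is `d`-torsionfree: it is a `d`-th syzygy of a finitely generated module `N`
with `Ext^i(N,R) = 0` for `1 ≤ i ≤ d`. -/
def IsTorsionFree (R : Type u) [CommRing R] (d : ℕ) (M : ModuleCat.{u} R) : Prop :=
  ∃ N : ModuleCat.{u} R, Module.Finite R N ∧
    (∀ i, 1 ≤ i → i ≤ d → extZero R i N (ModuleCat.of R R)) ∧ IsSyzygy R d M N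

/-- `N` lies in `add M`: it is a direct summand of a finite direct sum of copies of `M`. -/
def MemAdd (R : Type u) [CommRing R] (M N : ModuleCat.{u} R) : Prop :=
  ∃ (k : ℕ) (i : N →ₗ[R] (Fin k → M)) (p : (Fin k → M) →ₗ[R] N), p.comp i = LinearMap.id

/-- Projective dimension at most `n`, unbundled. -/
def PD (A : Type u) [Ring A] (F : Type u) [AddCommGroup F] [Module A F] (n : ℕ) : Prop :=
  HasProjectiveDimensionLE (ModuleCat.of A F) n

section pd
variable {A : Type u} [Ring A] {F G H : Type u} [AddCommGroup F] [Module A F]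
  [AddCommGroup G] [Module A G] [AddCommGroup H] [Module A H]

lemma pd_zero_iff : PD A F 0 ↔ Module.Projective A F := by
  rw [PD, ← projective_iff_hasProjectiveDimensionLE_zero, IsProjective.iff_projective]

lemma PD.mono {m n : ℕ} (h : PD A F m) (hmn : m ≤ n) : PD A F n :=
  @hasProjectiveDimensionLT_of_ge _ _ _ _ _ _ (Nat.succ_le_succ hmn) h

lemma pd_of_proj (h : Module.Projective A F) (n : ℕ) : PD A F n :=
  (pd_zero_iff.2 h).mono (Nat.zero_le _)

lemma mkSES (f : F →ₗ[A] G) (g : G →ₗ[A] H) (hf : Function.Injective f)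
    (hg : Function.Surjective g) (h : Function.Exact f g) :
    (ShortComplex.mk (ModuleCat.ofHom f) (ModuleCat.ofHom g)
      (by ext x; exact h.apply_apply_eq_zero x)).ShortExact where
  exact := (ShortComplex.ShortExact.moduleCat_exact_iff_function_exact _).mpr h
  mono_f := (ModuleCat.mono_iff_injective _).2 hf
  epi_g := (ModuleCat.epi_iff_surjective _).2 hg

lemma pd_mid (f : F →ₗ[A] G) (g : G →ₗ[A] H) (hf : Function.Injective f)
    (hg : Function.Surjective g) (h : Function.Exact f g) {n : ℕ} (h1 : PD A F n)
    (h3 : PD A H n) : PD A G n :=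
  (mkSES f g hf hg h).hasProjectiveDimensionLT_X₂ (n+1) h1 h3

lemma pd_right (f : F →ₗ[A] G) (g : G →ₗ[A] H) (hf : Function.Injective f)
    (hg : Function.Surjective g) (h : Function.Exact f g) {n : ℕ} (h1 : PD A F n)
    (h3 : PD A G (n+1)) : PD A H (n+1) :=
  (mkSES f g hf hg h).hasProjectiveDimensionLT_X₃ (n+1) h1 h3

lemma pd_left (f : F →ₗ[A] G) (g : G →ₗ[A] H) (hf : Function.Injective f)
    (hg : Function.Surjective g) (h : Function.Exact f g) {n : ℕ} (h1 : PD A G n)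
    (h3 : PD A H (n+1)) : PD A F n :=
  (mkSES f g hf hg h).hasProjectiveDimensionLT_X₁ (n+1) h1 h3

lemma pd_retract (i : F →ₗ[A] G) (p : G →ₗ[A] F) (h : p.comp i = LinearMap.id) {n : ℕ}
    (h1 : PD A G n) : PD A F n :=
  @Retract.hasProjectiveDimensionLT _ _ _ (ModuleCat.of A F) (ModuleCat.of A G)
    ⟨ModuleCat.ofHom i, ModuleCat.ofHom p, by rw [← ModuleCat.ofHom_comp, h]; rfl⟩ _ h1

lemma pdLE_iff (n : ℕ) (F : ModuleCat.{u} A) : pdLE A n F ↔ PD A F n := by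
  induction n generalizing F with
  | zero => rw [pd_zero_iff, pdLE, IsProjective.iff_projective]
  | succ n ih =>
    constructor
    · rintro (h | ⟨K, P, i, p, hP, hi, hp, hex, hK⟩)
      · exact pd_of_proj ((IsProjective.iff_projective F).2 h) _
      · exact pd_right i.hom p.hom hi hp hex ((ih K).1 hK)
          (pd_of_proj ((IsProjective.iff_projective P).2 hP) _)
    · intro h
      let g := Finsupp.linearCombination A (id : F → F)
      have hg : Function.Surjective g := Finsupp.linearCombination_id_surjective A F
      have hP : Module.Projective A (F →₀ A) := inferInstance
      refine Or.inr ⟨ModuleCat.of A (LinearMap.ker g), ModuleCat.of A (F →₀ A),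
        ModuleCat.ofHom (LinearMap.ker g).subtype, ModuleCat.ofHom g,
        (IsProjective.iff_projective _).1 hP, Subtype.val_injective, hg,
        LinearMap.exact_subtype_ker_map g, ?_⟩
      rw [ih]
      exact pd_left (LinearMap.ker g).subtype g Subtype.val_injective hg
        (LinearMap.exact_subtype_ker_map g) (pd_of_proj hP _) h

lemma gldim_pd {n : ℕ} (h : gldimLE A n) (F : Type u) [AddCommGroup F] [Module A F] : PD A F n :=
  (pdLE_iff n (ModuleCat.of A F)).1 (h _)

lemma pd_finsupp {n : ℕ} (I : Type u) (h : PD A F n) : PD A (I →₀ F) n := by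
  induction n generalizing F with
  | zero =>
    rw [pd_zero_iff] at *
    classical exact Module.Projective.of_equiv' (finsuppLequivDFinsupp A).symm
  | succ n ih =>
      let g := Finsupp.linearCombination A (id : F → F)
      have hg : Function.Surjective g := Finsupp.linearCombination_id_surjective A F
      have hP : Module.Projective A (F →₀ A) := inferInstance
      have h1 : PD A (LinearMap.ker g) n :=
        pd_left (LinearMap.ker g).subtype g Subtype.val_injective hg
          (LinearMap.exact_subtype_ker_map g) (pd_of_proj hP _) h
      refine pd_right (G := I →₀ (F →₀ A)) (Finsupp.mapRange.linearMap (α := I) (LinearMap.ker g).subtype)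
        (Finsupp.mapRange.linearMap g) ?_ ?_ ?_ (ih h1) (pd_of_proj inferInstance _)
      · exact Finsupp.mapRange_injective _ (by simp) Subtype.val_injective
      · exact Finsupp.mapRange_surjective _ (by simp) hg
      · intro x
        constructor
        · intro hx
          have hx' : ∀ i, g (x i) = 0 := fun i => by
            have := DFunLike.congr_fun hx i
            simpa using this
          refine ⟨Finsupp.onFinset x.support (fun i => ⟨x i, hx' i⟩) ?_, ?_⟩
          · intro a ha
            rw [Finsupp.mem_support_iff]
            intro h0
            exact ha (Subtype.ext h0)
          · ext1 i; simp
        · rintro ⟨y, rfl⟩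
          ext1 i
          simp

end pd


/-- `B` is identified with the corner ring `eAe` of `A`. -/
structure CornerMap (B A : Type u) [Ring B] [Ring A] where
  φ : B →ₙ+* A
  inj : Function.Injective φ
  corner : ∀ a : A, ∃ b : B, φ b = φ 1 * a * φ 1

section corner
variable {A B : Type u} [Ring A] [Ring B] (κ : CornerMap B A)
variable {F G H : Type u} [AddCommGroup F] [Module A F]
  [AddCommGroup G] [Module A G] [AddCommGroup H] [Module A H]

/-- The idempotent. -/
def CornerMap.e : A := κ.φ 1

lemma CornerMap.e_mul (b : B) : κ.e * κ.φ b = κ.φ b := by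
  rw [CornerMap.e, ← map_mul, one_mul]

lemma CornerMap.mul_e (b : B) : κ.φ b * κ.e = κ.φ b := by
  rw [CornerMap.e, ← map_mul, mul_one]

lemma CornerMap.e_e : κ.e * κ.e = κ.e := κ.e_mul 1

/-- The map `a ↦ eae`. -/
def CornerMap.c (a : A) : B := (κ.corner a).choose

lemma CornerMap.φ_c (a : A) : κ.φ (κ.c a) = κ.e * a * κ.e := (κ.corner a).choose_spec

lemma CornerMap.c_add (a b : A) : κ.c (a + b) = κ.c a + κ.c b := by
  apply κ.inj; simp only [map_add, κ.φ_c, mul_add, add_mul]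

lemma CornerMap.c_zero : κ.c 0 = 0 := by
  apply κ.inj; simp only [map_zero, κ.φ_c, mul_zero, zero_mul]

lemma CornerMap.c_mul (b : B) (a : A) : κ.c (κ.φ b * a) = b * κ.c a := by
  apply κ.inj
  rw [map_mul, κ.φ_c, κ.φ_c, ← mul_assoc, κ.e_mul, ← mul_assoc, ← mul_assoc, κ.mul_e]

/-- The `B`-module `eF`. -/
def EP (_κ : CornerMap B A) (F : Type u) [AddCommGroup F] [Module A F] : Type u :=
  {x : F // _κ.e • x = x}

/-- `eF` as an additive subgroup. -/
def ePartSub (F : Type u) [AddCommGroup F] [Module A F] : AddSubgroup F where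
  carrier := {x | κ.e • x = x}
  add_mem' := by intro a b ha hb; simp only [Set.mem_setOf_eq] at *; rw [smul_add, ha, hb]
  zero_mem' := by simp
  neg_mem' := by intro a ha; simp only [Set.mem_setOf_eq] at *; rw [smul_neg, ha]

instance : AddCommGroup (EP κ F) := inferInstanceAs (AddCommGroup (ePartSub κ F))

lemma EP.ext {x y : EP κ F} (h : x.1 = y.1) : x = y := Subtype.ext h

lemma EP.add_val (x y : EP κ F) : (x + y).1 = x.1 + y.1 := rfl
lemma EP.zero_val : (0 : EP κ F).1 = 0 := rfl

/-- The value map. -/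
def EP.val' : EP κ F →+ F := (ePartSub κ F).subtype

lemma EP.val'_apply (x : EP κ F) : EP.val' κ x = x.1 := rfl

instance : Module B (EP κ F) where
  smul b x := ⟨κ.φ b • x.1, by rw [smul_smul, κ.e_mul]⟩
  one_smul x := Subtype.ext x.2
  mul_smul b c x := Subtype.ext (by
    change κ.φ (b * c) • x.1 = κ.φ b • κ.φ c • x.1
    rw [map_mul, mul_smul])
  smul_zero b := Subtype.ext (smul_zero (κ.φ b))
  smul_add b x y := Subtype.ext (smul_add (κ.φ b) x.1 y.1)
  add_smul b c x := Subtype.ext (by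
    change κ.φ (b + c) • x.1 = κ.φ b • x.1 + κ.φ c • x.1
    rw [map_add, add_smul])
  zero_smul x := Subtype.ext (by
    change κ.φ 0 • x.1 = 0
    rw [map_zero, zero_smul])

lemma EP.smul_val (b : B) (x : EP κ F) : (b • x).1 = κ.φ b • x.1 := rfl

/-- `ex ∈ eF`. -/
def EP.mk' (x : F) : EP κ F := ⟨κ.e • x, by rw [smul_smul, κ.e_e]⟩

/-- functoriality -/
def EP.map (f : F →ₗ[A] G) : EP κ F →ₗ[B] EP κ G where
  toFun x := ⟨f x.1, by rw [← map_smul, x.2]⟩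
  map_add' x y := Subtype.ext (map_add f x.1 y.1)
  map_smul' b x := Subtype.ext (map_smul f (κ.φ b) x.1)

lemma EP.map_val (f : F →ₗ[A] G) (x : EP κ F) : (EP.map κ f x).1 = f x.1 := rfl

lemma EP.map_inj (f : F →ₗ[A] G) (hf : Function.Injective f) :
    Function.Injective (EP.map κ f) := fun x y h => Subtype.ext (hf (congrArg Subtype.val h))

lemma EP.map_exact (f : F →ₗ[A] G) (g : G →ₗ[A] H) (hf : Function.Injective f)
    (h : Function.Exact f g) : Function.Exact (EP.map κ f) (EP.map κ g) := by
  intro y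
  constructor
  · intro hy
    obtain ⟨x, hx⟩ := (h y.1).1 (congrArg Subtype.val hy)
    exact ⟨⟨x, hf (by rw [map_smul, hx, y.2])⟩, Subtype.ext hx⟩
  · rintro ⟨x, rfl⟩
    exact Subtype.ext (h.apply_apply_eq_zero x.1)

lemma EP.map_surj (f : F →ₗ[A] G) (hf : Function.Surjective f) :
    Function.Surjective (EP.map κ f) := by
  intro y
  obtain ⟨x, hx⟩ := hf y.1
  exact ⟨EP.mk' κ x, Subtype.ext (by
    change f (κ.e • x) = y.1
    rw [map_smul, hx, y.2])⟩

/-- `T` lies in `Add (Ae)`. -/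
def IsAddE (T : Type u) [AddCommGroup T] [Module A T] : Prop :=
  Module.Projective A T ∧ Submodule.span A {x : T | κ.e • x = x} = ⊤

variable {κ} in
lemma IsAddE.ext {T : Type u} [AddCommGroup T] [Module A T] (hT : IsAddE κ T)
    {f g : T →ₗ[A] F} (h : ∀ x : T, κ.e • x = x → f x = g x) : f = g :=
  LinearMap.ext_on hT.2 h

variable {κ} in
lemma IsAddE.coord {T : Type u} [AddCommGroup T] [Module A T] (hT : IsAddE κ T) :
    ∃ σ : T →ₗ[A] (EP κ T →₀ A), ∀ x, Finsupp.linearCombination A (fun t : EP κ T => t.1) (σ x) = x := by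
  haveI := hT.1
  have hs : Function.Surjective (Finsupp.linearCombination A (fun t : EP κ T => t.1)) := by
    rw [← LinearMap.range_eq_top, Finsupp.range_linearCombination, ← hT.2]
    congr 1
    ext x
    constructor
    · rintro ⟨y, rfl⟩; exact y.2
    · intro hx; exact ⟨⟨x, hx⟩, rfl⟩
  obtain ⟨σ, hσ⟩ := Module.projective_lifting_property
    (Finsupp.linearCombination A (fun t : EP κ T => t.1)) LinearMap.id hs
  exact ⟨σ, fun x => LinearMap.congr_fun hσ x⟩

lemma EP.c_smul (x : EP κ F) (a : A) (t : EP κ G) (f : EP κ G →ₗ[B] EP κ F) (ha : κ.e * a = a) :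
    a • (f t).1 = (f (κ.c a • t)).1 := by
  rw [map_smul, EP.smul_val, κ.φ_c, mul_smul, (f t).2, ha]

variable {κ} in
lemma IsAddE.lift {T : Type u} [AddCommGroup T] [Module A T] (hT : IsAddE κ T)
    (g : EP κ T →ₗ[B] EP κ F) : ∃ f : T →ₗ[A] F, ∀ x : EP κ T, f x.1 = (g x).1 := by
  obtain ⟨σ, hσ⟩ := hT.coord
  refine ⟨(Finsupp.linearCombination A (fun t : EP κ T => (g t).1)).comp σ, fun x => ?_⟩
  have hx : ∀ t, κ.e * σ x.1 t = σ x.1 t := fun t => by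
    have := congrArg (fun s => s t) (congrArg σ x.2)
    simpa [map_smul] using this
  have h1 : x = (σ x.1).sum (fun t a => κ.c a • t) := by
    apply Subtype.ext
    rw [← EP.val'_apply, ← EP.val'_apply, map_finsuppSum]
    rw [EP.val'_apply]
    conv_lhs => rw [← hσ x.1]
    rw [Finsupp.linearCombination_apply]
    refine Finsupp.sum_congr fun t _ => ?_
    exact EP.c_smul κ t _ t LinearMap.id (hx t)
  rw [LinearMap.comp_apply, Finsupp.linearCombination_apply]
  conv_rhs => rw [h1, map_finsuppSum, ← EP.val'_apply, map_finsuppSum]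
  refine Finsupp.sum_congr fun t _ => ?_
  exact EP.c_smul κ (g t) _ t g (hx t)

variable {κ} in
lemma IsAddE.proj {T : Type u} [AddCommGroup T] [Module A T] (hT : IsAddE κ T) :
    Module.Projective B (EP κ T) := by
  obtain ⟨σ, hσ⟩ := hT.coord
  let cc : A →+ B := ⟨⟨κ.c, κ.c_zero⟩, κ.c_add⟩
  refine Module.projective_def.2 ⟨
    { toFun := fun x => (σ x.1).mapRange cc (map_zero _)
      map_add' := fun x y => by
        rw [EP.add_val, map_add, Finsupp.mapRange_add (by exact map_add cc)]
      map_smul' := fun b x => by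
        ext t
        simp only [EP.smul_val, map_smul, Finsupp.mapRange_apply, Finsupp.smul_apply,
          RingHom.id_apply, smul_eq_mul]
        exact κ.c_mul b _ }, fun x => ?_⟩
  have hx : ∀ t, κ.e * σ x.1 t = σ x.1 t := fun t => by
    have := congrArg (fun s => s t) (congrArg σ x.2)
    simpa [map_smul] using this
  apply Subtype.ext
  simp only [LinearMap.coe_mk, AddHom.coe_mk]
  rw [Finsupp.linearCombination_apply, Finsupp.sum_mapRange_index (by intro t; simp)]
  rw [← EP.val'_apply, map_finsuppSum]
  conv_rhs => rw [← hσ x.1]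
  rw [Finsupp.linearCombination_apply]
  refine Finsupp.sum_congr fun t _ => ?_
  exact (EP.c_smul κ t _ t LinearMap.id (hx t)).symm

/-- `Ae` -/
abbrev CornerMap.U : Submodule A A := Submodule.span A {κ.e}

lemma CornerMap.U_mul_e (x : κ.U) : x.1 * κ.e = x.1 := by
  obtain ⟨a, ha⟩ := Submodule.mem_span_singleton.1 x.2
  rw [← ha, smul_eq_mul, mul_assoc, κ.e_e]

lemma CornerMap.U_addE (I : Type u) : IsAddE κ (I →₀ κ.U) := by
  have hU : Module.Projective A κ.U := by
    refine Module.Projective.of_split κ.U.subtype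
      ((LinearMap.toSpanSingleton A A κ.e).codRestrict κ.U
        (fun a => Submodule.mem_span_singleton.2 ⟨a, rfl⟩)) ?_
    ext x
    exact κ.U_mul_e x
  refine ⟨pd_zero_iff.1 (pd_finsupp I (pd_zero_iff.2 hU)), ?_⟩
  rw [eq_top_iff]
  rintro x -
  induction x using Finsupp.induction_linear with
  | zero => exact zero_mem _
  | add f g hf hg => exact add_mem hf hg
  | single i a =>
    obtain ⟨a, ha⟩ := a
    obtain ⟨b, rfl⟩ := Submodule.mem_span_singleton.1 ha
    have : Finsupp.single i (⟨b • κ.e, ha⟩ : κ.U) =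
        b • Finsupp.single i (⟨κ.e, Submodule.mem_span_singleton_self _⟩ : κ.U) := by
      rw [Finsupp.smul_single]; rfl
    rw [this]
    refine Submodule.smul_mem _ _ (Submodule.subset_span ?_)
    change κ.e • _ = _
    rw [Finsupp.smul_single]
    congr 1
    exact Subtype.ext κ.e_e

lemma CornerMap.cover (F : Type u) [AddCommGroup F] [Module A F] :
    ∃ (T : Type u) (_ : AddCommGroup T) (_ : Module A T) (f : T →ₗ[A] F),
      IsAddE κ T ∧ Function.Surjective (EP.map κ f) := by
  refine ⟨EP κ F →₀ κ.U, inferInstance, inferInstance,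
    Finsupp.lsum ℕ (fun t => (LinearMap.toSpanSingleton A F t.1).comp κ.U.subtype),
    κ.U_addE _, fun t => ?_⟩
  refine ⟨⟨Finsupp.single t ⟨κ.e, Submodule.mem_span_singleton_self _⟩, ?_⟩, ?_⟩
  · rw [Finsupp.smul_single]
    congr 1
    exact Subtype.ext κ.e_e
  · refine Subtype.ext ?_
    change Finsupp.lsum ℕ (fun t : EP κ F => (LinearMap.toSpanSingleton A F t.1).comp κ.U.subtype)
      (Finsupp.single t ⟨κ.e, Submodule.mem_span_singleton_self _⟩) = t.1
    refine (Finsupp.lsum_single _ _ _ _).trans ?_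
    exact t.2

end corner


section lemA
variable {A B : Type u} [Ring A] [Ring B] (κ : CornerMap B A)

/-- The inductive bound for `pd_A F` in terms of `pd_B eF`. -/
lemma lemA {p : ℕ}
    (hp : ∀ (H : Type u) [AddCommGroup H] [Module A H], (∀ x : H, κ.e • x = 0) → PD A H p)
    (k : ℕ) (F : Type u) [AddCommGroup F] [Module A F] (hF : PD B (EP κ F) k) :
    PD A F (p + 1 + k) := by
  have key : ∀ (F T : Type u) [AddCommGroup F] [Module A F] [AddCommGroup T] [Module A T]
      (f : T →ₗ[A] F) (m : ℕ), p ≤ m → Module.Projective A T → Function.Surjective (EP.map κ f) →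
      PD A (LinearMap.ker f) m → PD A F (m+1) := by
    intro F T _ _ _ _ f m hm hT hsurj hker
    have h1 : PD A (LinearMap.range f) (m+1) :=
      pd_right (LinearMap.ker f).subtype f.rangeRestrict Subtype.val_injective
        f.surjective_rangeRestrict (by
          intro x
          rw [← LinearMap.mem_ker, LinearMap.ker_rangeRestrict]
          simp) hker (pd_of_proj hT _)
    refine pd_mid (LinearMap.range f).subtype (LinearMap.range f).mkQ Subtype.val_injective
      (Submodule.mkQ_surjective _) (LinearMap.exact_subtype_mkQ _) h1 ((hp _ ?_).mono (by omega))
    intro x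
    obtain ⟨y, rfl⟩ := Submodule.mkQ_surjective _ x
    rw [← map_smul]
    obtain ⟨t, ht⟩ := hsurj (EP.mk' κ y)
    have : f t.1 = κ.e • y := congrArg Subtype.val ht
    rw [← this, Submodule.mkQ_apply, Submodule.Quotient.mk_eq_zero]
    exact ⟨_, rfl⟩
  induction k generalizing F with
  | zero =>
    obtain ⟨T, _, _, f, hT, hf⟩ := κ.cover F
    have hproj := pd_zero_iff.1 hF
    obtain ⟨s, hs⟩ := Module.projective_lifting_property (EP.map κ f) LinearMap.id hf
    have hs' : ∀ x, EP.map κ f (s x) = x := fun x => LinearMap.congr_fun hs x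
    obtain ⟨ε, hε⟩ := hT.lift (s.comp (EP.map κ f))
    have hε2 : ε.comp ε = ε := hT.ext fun x hx => by
      obtain ⟨x, rfl⟩ : ∃ x' : EP κ T, x'.1 = x := ⟨⟨x, hx⟩, rfl⟩
      have h1 := hε x
      change ε (ε x.1) = ε x.1
      rw [h1, hε, LinearMap.comp_apply, LinearMap.comp_apply, hs']
    have hr : ∀ x : LinearMap.range ε, ε x.1 = x.1 := by
      rintro ⟨_, y, rfl⟩
      exact LinearMap.congr_fun hε2 y
    have hT' : Module.Projective A (LinearMap.range ε) := by
      have := hT.1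
      refine Module.Projective.of_split (LinearMap.range ε).subtype ε.rangeRestrict ?_
      ext x
      exact hr x
    refine key F (LinearMap.range ε) (f.comp (LinearMap.range ε).subtype) p le_rfl hT' ?_ (hp _ ?_)
    · intro y
      have h3 : ε (s y).1 = (s y).1 := by
        rw [hε, LinearMap.comp_apply, hs']
      refine ⟨⟨⟨(s y).1, ⟨_, h3⟩⟩, Subtype.ext (s y).2⟩, Subtype.ext ?_⟩
      exact congrArg Subtype.val (hs' y)
    · intro x
      have hx1 : f (κ.e • x.1.1) = 0 := by
        have := x.2
        rw [LinearMap.mem_ker] at this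
        rw [map_smul]
        change κ.e • (f.comp (LinearMap.range ε).subtype) x.1 = 0
        rw [this, smul_zero]
      apply Subtype.ext
      apply Subtype.ext
      change κ.e • x.1.1 = 0
      have h4 := hε (EP.mk' κ x.1.1)
      have h5 : EP.map κ f (EP.mk' κ x.1.1) = 0 := Subtype.ext hx1
      rw [LinearMap.comp_apply, h5, map_zero] at h4
      have h6 : ε (κ.e • x.1.1) = 0 := h4
      rw [map_smul, hr x.1] at h6
      exact h6
  | succ k ih =>
    obtain ⟨T, _, _, f, hT, hf⟩ := κ.cover F
    refine key F T f (p + 1 + k) (by omega) hT.1 hf (ih _ ?_)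
    exact pd_left (EP.map κ (LinearMap.ker f).subtype) (EP.map κ f)
      (EP.map_inj κ _ Subtype.val_injective) hf
      (EP.map_exact κ _ _ Subtype.val_injective (LinearMap.exact_subtype_ker_map f))
      (pd_of_proj hT.proj _) hF

/-- `K` has a partial resolution of length `m` by modules in `Add (Ae)`. -/
def GenPres : ℕ → ∀ (K : Type u) [AddCommGroup K] [Module A K], Prop
  | 0, _, _, _ => True
  | m+1, K, _, _ => ∃ (T L : Type u) (_ : AddCommGroup T) (_ : Module A T)
      (_ : AddCommGroup L) (_ : Module A L) (i : L →ₗ[A] T) (f : T →ₗ[A] K), IsAddE κ T ∧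
      Function.Injective i ∧ Function.Surjective f ∧ Function.Exact i f ∧ GenPres m L

lemma genPres_zero (m : ℕ) (K : Type u) [AddCommGroup K] [Module A K] (hK : Subsingleton K) :
    GenPres κ m K := by
  induction m with
  | zero => trivial
  | succ m ih =>
    refine ⟨K, K, inferInstance, inferInstance, inferInstance, inferInstance,
      LinearMap.id, LinearMap.id, ⟨?_, ?_⟩, fun _ _ h => h, fun x => ⟨x, rfl⟩, ?_, ih⟩
    · infer_instance
    · exact Subsingleton.elim _ _
    · intro x
      exact ⟨fun _ => ⟨x, rfl⟩, fun _ => Subsingleton.elim _ _⟩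

lemma genPres_pd (n : ℕ) (K : Type u) [AddCommGroup K] [Module A K] (hK : GenPres κ (n+2) K)
    (h : PD B (EP κ K) n) : PD A K n := by
  induction n generalizing K with
  | zero =>
    obtain ⟨T, L, _, _, _, _, i, f, hT, hi, hf, hex, T', L', _, _, _, _, i', f', hT', _, hf', _, _⟩ := hK
    have hproj := pd_zero_iff.1 h
    obtain ⟨s, hs⟩ := Module.projective_lifting_property (EP.map κ f) LinearMap.id
      (EP.map_surj κ f hf)
    have hs' : ∀ x, EP.map κ f (s x) = x := fun x => LinearMap.congr_fun hs x
    obtain ⟨ε, hε⟩ := hT.lift (s.comp (EP.map κ f))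
    have h0 : (ε.comp i).comp f' = 0 := hT'.ext fun x hx => by
      have h1 := hε (EP.map κ (i.comp f') ⟨x, hx⟩)
      have h2 : EP.map κ f (EP.map κ (i.comp f') ⟨x, hx⟩) = 0 :=
        Subtype.ext (hex.apply_apply_eq_zero _)
      rw [LinearMap.comp_apply, h2, map_zero] at h1
      exact h1
    have h1 : ∀ x, f x = 0 → ε x = 0 := by
      intro x hx
      obtain ⟨y, rfl⟩ := (hex x).1 hx
      obtain ⟨z, rfl⟩ := hf' y
      exact LinearMap.congr_fun h0 z
    have h2 : f.comp ε = f := hT.ext fun x hx => by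
      obtain ⟨x, rfl⟩ : ∃ x' : EP κ T, x'.1 = x := ⟨⟨x, hx⟩, rfl⟩
      rw [LinearMap.comp_apply, hε x, LinearMap.comp_apply]
      exact congrArg Subtype.val (hs' (EP.map κ f x))
    rw [pd_zero_iff]
    have := hT.1
    let e1 := f.quotKerEquivOfSurjective hf
    refine Module.Projective.of_split (((LinearMap.ker f).liftQ ε (fun x hx => h1 x hx)).comp
      e1.symm.toLinearMap) f ?_
    ext x
    obtain ⟨y, rfl⟩ := hf x
    have h4 : e1.symm (f y) = (LinearMap.ker f).mkQ y := by
      rw [LinearEquiv.symm_apply_eq]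
      rfl
    rw [LinearMap.comp_apply, LinearMap.comp_apply, LinearEquiv.coe_coe, h4]
    exact LinearMap.congr_fun h2 y
  | succ n ih =>
    obtain ⟨T, L, _, _, _, _, i, f, hT, hi, hf, hex, hL⟩ := hK
    refine pd_right i f hi hf hex (ih L hL ?_) (pd_of_proj hT.1 _)
    exact pd_left (EP.map κ i) (EP.map κ f) (EP.map_inj κ _ hi) (EP.map_surj κ _ hf)
      (EP.map_exact κ _ _ hi hex) (pd_of_proj hT.proj _) h

end lemA

section change
variable {A C : Type u} [Ring A] [Ring C] (Ψ : A →+* C)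

lemma pd_change [Module A C] (hAC : ∀ (a : A) (x : C), a • x = Ψ a * x) {q : ℕ}
    (hq : PD A C q) (n : ℕ) (H : Type u) [AddCommGroup H] [Module C H] [Module A H]
    (hH : ∀ (a : A) (x : H), a • x = Ψ a • x) (h : PD C H n) : PD A H (n + q) := by
  have res : ∀ (F G : Type u) [AddCommGroup F] [AddCommGroup G] [Module A F] [Module A G]
      [Module C F] [Module C G] (_ : ∀ (a : A) (x : F), a • x = Ψ a • x)
      (_ : ∀ (a : A) (x : G), a • x = Ψ a • x) (f : F →ₗ[C] G),
      ∃ f' : F →ₗ[A] G, ∀ x, f' x = f x := by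
    intro F G _ _ _ _ _ _ h1 h2 f
    exact ⟨{ toFun := f
             map_add' := map_add f
             map_smul' := fun a x => by simp [h1, h2] }, fun _ => rfl⟩
  have hfree : ∀ (a : A) (x : H →₀ C), a • x = Ψ a • x := by
    intro a x; ext t; simp [hAC]
  have hpf := pd_finsupp H hq
  induction n generalizing H with
  | zero =>
    obtain ⟨s, hs⟩ := Module.projective_def'.1 (pd_zero_iff.1 h)
    obtain ⟨s', hs'⟩ := res _ _ hH hfree s
    obtain ⟨g', hg'⟩ := res _ _ hfree hH (Finsupp.linearCombination C (id : H → H))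
    rw [Nat.zero_add]
    refine pd_retract s' g' ?_ hpf
    ext x
    rw [LinearMap.comp_apply, hs', hg']
    exact LinearMap.congr_fun hs x
  | succ n ih =>
    let g := Finsupp.linearCombination C (id : H → H)
    have hg : Function.Surjective g := Finsupp.linearCombination_id_surjective C H
    letI : Module A (LinearMap.ker g) := Module.compHom _ Ψ
    have hk : ∀ (a : A) (x : LinearMap.ker g), a • x = Ψ a • x := fun _ _ => rfl
    have h1 : PD C (LinearMap.ker g) n :=
      pd_left (LinearMap.ker g).subtype g Subtype.val_injective hg
        (LinearMap.exact_subtype_ker_map g) (pd_of_proj inferInstance _) h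
    obtain ⟨i', hi'⟩ := res (LinearMap.ker g) _ hk hfree (LinearMap.ker g).subtype
    obtain ⟨g', hg'⟩ := res _ _ hfree hH g
    have h2 := ih (LinearMap.ker g) hk h1 (by intro a x; ext t; simp [hAC]) (pd_finsupp _ hq)
    have : n + 1 + q = (n + q) + 1 := by omega
    rw [this]
    have e1 : (g' : _ → _) = g := funext hg'
    have e2 : (i' : _ → _) = (LinearMap.ker g).subtype := funext hi'
    refine pd_right i' g' ?_ ?_ ?_ h2 (hpf.mono (by omega))
    · rw [e2]; exact Subtype.val_injective
    · rw [e1]; exact hg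
    · rw [e1, e2]; exact LinearMap.exact_subtype_ker_map g

end change


section ext
open CategoryTheory.Abelian
variable {R : Type u} [CommRing R]

/-- Vanishing of `Ext`, with the Mathlib `Abelian.Ext`. -/
def EH (X Z : ModuleCat.{u} R) (i : ℕ) : Prop := ∀ x : Abelian.Ext X Z i, x = 0

lemma extZero.eh {i : ℕ} {X Y : ModuleCat.{u} R} (h : extZero R i X Y) : EH X Y i := by
  intro x
  let P := ProjectiveResolution.of X
  have h1 : Limits.IsZero ((P.complex.linearYonedaObj R Y).homology i) := by
    refine Limits.IsZero.of_iso ?_ (P.isoExt (R := R) i Y).symm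
    exact (ModuleCat.isZero_iff_subsingleton).2 h
  rw [← HomologicalComplex.exactAt_iff_isZero_homology,
    HomologicalComplex.exactAt_iff, ShortComplex.moduleCat_exact_iff] at h1
  obtain ⟨f, hf, rfl⟩ := P.extMk_surjective x (i+1) rfl
  have hnext : (ComplexShape.up ℕ).next i = i + 1 := by simp
  have h2 := h1 f (by
    change (P.complex.linearYonedaObj R Y).d i ((ComplexShape.up ℕ).next i) f = 0
    rw [hnext]
    exact hf)
  obtain ⟨g, hg⟩ := h2
  change (P.complex.linearYonedaObj R Y).d ((ComplexShape.up ℕ).prev i) i g = f at hg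
  cases i with
  | zero =>
    have : f = 0 := by
      rw [← hg, HomologicalComplex.shape _ _ _ (by simp)]
      rfl
    subst this
    simp
  | succ i =>
    rw [P.extMk_eq_zero_iff f _ rfl hf i rfl]
    have key : ∀ j, j = i → ∀ g : (P.complex.linearYonedaObj R Y).X j,
        (P.complex.linearYonedaObj R Y).d j (i+1) g = f →
          ∃ g : P.complex.X i ⟶ Y, P.complex.d (i+1) i ≫ g = f := by
      rintro j rfl g hg
      exact ⟨g, hg⟩
    exact key _ (by simp) g hg

lemma EH.fgproj {i : ℕ} {X P : ModuleCat.{u} R} (h : EH X (ModuleCat.of R R) i)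
    (hP : Projective P) (hf : Module.Finite R P) : EH X P i := by
  intro x
  have := (IsProjective.iff_projective P).2 hP
  obtain ⟨n, f, g, _, _, hfg⟩ := Module.Finite.exists_comp_eq_id_of_projective R P
  have hid : 𝟙 P = ∑ j : Fin n, ModuleCat.ofHom ((LinearMap.proj j : (Fin n → R) →ₗ[R] R).comp g) ≫
      ModuleCat.ofHom (f.comp (LinearMap.single R (fun _ => R) j)) := by
    ext y
    rw [ModuleCat.hom_sum]
    simp only [ModuleCat.hom_id, LinearMap.id_apply, LinearMap.sum_apply, ModuleCat.hom_comp,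
      ModuleCat.hom_ofHom, LinearMap.comp_apply]
    rw [← map_sum]
    conv_lhs => rw [← LinearMap.id_apply (R := R) y, ← hfg, LinearMap.comp_apply]
    congr 1
    ext k
    simp [Finset.sum_apply, Pi.single_apply]
  rw [← Abelian.Ext.comp_mk₀_id x, hid, Abelian.Ext.mk₀_sum, Abelian.Ext.comp_sum]
  refine Finset.sum_eq_zero fun j _ => ?_
  rw [← Abelian.Ext.mk₀_comp_mk₀, ← Abelian.Ext.comp_assoc_of_second_deg_zero]
  rw [h (x.comp _ _), Abelian.Ext.zero_comp]

lemma mkSES' {Y P K : ModuleCat.{u} R} (i : Y ⟶ P) (p : P ⟶ K) (hi : Function.Injective i)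
    (hp : Function.Surjective p) (h : Function.Exact i p) :
    (ShortComplex.mk i p (by ext x; exact h.apply_apply_eq_zero x)).ShortExact :=
  ModuleCat.shortComplex_shortExact _ h hi hp

lemma eh_syz {c : ℕ} {X : ModuleCat.{u} R} (hX : ∀ i ≤ c, EH X (ModuleCat.of R R) i)
    (k : ℕ) (Z N : ModuleCat.{u} R) (h : IsSyzygy R k Z N) (i : ℕ) (hic : i ≤ c) (hik : i < k) :
    EH X Z i := by
  induction k generalizing Z i with
  | zero => omega
  | succ k ih =>
    obtain ⟨P, K, f, p, hP, hPf, hf, hp, hex, hK⟩ := h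
    have S := mkSES' f p hf hp hex
    intro x
    have h0 : x.comp (Abelian.Ext.mk₀ f) (add_zero i) = 0 := (hX i hic).fgproj hP hPf _
    cases i with
    | zero =>
      have : Mono f := S.mono_f
      apply Abelian.Ext.postcomp_mk₀_injective_of_mono X f
      simpa using h0
    | succ i =>
      obtain ⟨y, hy⟩ := Abelian.Ext.covariant_sequence_exact₁ X S x h0 rfl
      rw [← hy, ih K hK i (by omega) (by omega) y, Abelian.Ext.zero_comp]

lemma eh_shift {X : ModuleCat.{u} R} (n : ℕ) (Y Z : ModuleCat.{u} R) (h : IsSyzygy R n Y X)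
    (i : ℕ) (hi : 1 ≤ i) (hE : EH X Z (i + n)) : EH Y Z i := by
  induction n generalizing Y i with
  | zero =>
    obtain ⟨e⟩ := h
    intro x
    have : x = (Abelian.Ext.mk₀ e.hom).comp ((Abelian.Ext.mk₀ e.inv).comp x (zero_add i))
        (zero_add i) := by
      rw [Abelian.Ext.mk₀_comp_mk₀_assoc, e.hom_inv_id, Abelian.Ext.mk₀_id_comp]
    rw [this, hE ((Abelian.Ext.mk₀ e.inv).comp x (zero_add i)), Abelian.Ext.comp_zero]
  | succ n ih =>
    obtain ⟨P, K, f, p, hP, hPf, hf, hp, hex, hK⟩ := h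
    have S := mkSES' f p hf hp hex
    have hKE : EH K Z (1 + i) := ih K hK (1 + i) (by omega) (by
      have : 1 + i + n = i + (n + 1) := by omega
      rw [this]; exact hE)
    intro x
    obtain ⟨y, hy⟩ := Abelian.Ext.contravariant_sequence_exact₁ S Z x rfl (hKE _)
    obtain ⟨j, rfl⟩ : ∃ j, i = j + 1 := ⟨i - 1, by omega⟩
    have hPS : Projective (ShortComplex.mk f p (by ext x; exact hex.apply_apply_eq_zero x)).X₂ := hP
    rw [← hy, Abelian.Ext.eq_zero_of_projective y, Abelian.Ext.comp_zero]

lemma eh_extend {Y P K Z : ModuleCat.{u} R} (f : Y ⟶ P) (p : P ⟶ K) (hf : Function.Injective f)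
    (hp : Function.Surjective p) (h : Function.Exact f p) (hE : EH K Z 1) (s : Y →ₗ[R] Z) :
    ∃ t : P →ₗ[R] Z, t.comp f.hom = s := by
  have S := mkSES' f p hf hp h
  obtain ⟨y, hy⟩ := Abelian.Ext.contravariant_sequence_exact₁ S Z
    (Abelian.Ext.mk₀ (ModuleCat.ofHom s)) rfl (hE _)
  obtain ⟨t, rfl⟩ := Abelian.Ext.addEquiv₀.symm.surjective y
  refine ⟨t.hom, ?_⟩
  have h2 : (Abelian.Ext.mk₀ (f ≫ t)) = Abelian.Ext.mk₀ (ModuleCat.ofHom s) := by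
    rw [← hy, ← Abelian.Ext.mk₀_comp_mk₀]
    rfl
  have h3 := (Abelian.Ext.mk₀_bijective _ _).1 h2
  exact congrArg ModuleCat.Hom.hom h3

lemma eh_hom {X Z : ModuleCat.{u} R} (h : EH X Z 0) (f : X →ₗ[R] Z) : f = 0 := by
  have h1 := h (Abelian.Ext.mk₀ (ModuleCat.ofHom f))
  rw [← Abelian.Ext.mk₀_zero] at h1
  exact congrArg ModuleCat.Hom.hom ((Abelian.Ext.mk₀_bijective _ _).1 h1)

end ext


section psi
variable {R : Type u} [CommRing R]

/-- The map factors through a finite free module. -/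
def FF {Y Z : Type u} [AddCommGroup Y] [AddCommGroup Z] [Module R Y] [Module R Z]
    (f : Y →ₗ[R] Z) : Prop :=
  ∃ (n : ℕ) (s : Y →ₗ[R] (Fin n → R)) (t : (Fin n → R) →ₗ[R] Z), t.comp s = f

lemma FF.of_proj {Y Z P : Type u} [AddCommGroup Y] [AddCommGroup Z] [AddCommGroup P]
    [Module R Y] [Module R Z] [Module R P] [Module.Projective R P] [Module.Finite R P]
    (s : Y →ₗ[R] P) (t : P →ₗ[R] Z) : FF (t.comp s) := by
  obtain ⟨n, f, g, _, _, hfg⟩ := Module.Finite.exists_comp_eq_id_of_projective R P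
  refine ⟨n, g.comp s, t.comp f, ?_⟩
  rw [LinearMap.comp_assoc, ← LinearMap.comp_assoc s, hfg, LinearMap.id_comp]

lemma FF.comp_left {Y Z Z' : Type u} [AddCommGroup Y] [AddCommGroup Z] [AddCommGroup Z']
    [Module R Y] [Module R Z] [Module R Z'] {f : Y →ₗ[R] Z} (hf : FF f) (g : Z →ₗ[R] Z') :
    FF (g.comp f) := by
  obtain ⟨n, s, t, rfl⟩ := hf
  exact ⟨n, s, g.comp t, rfl⟩

lemma desc_ex {Y P K Z : Type u} [AddCommGroup Y] [AddCommGroup P] [AddCommGroup K]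
    [AddCommGroup Z] [Module R Y] [Module R P] [Module R K] [Module R Z]
    (i : Y →ₗ[R] P) (p : P →ₗ[R] K) (hp : Function.Surjective p) (h : Function.Exact i p)
    (g : P →ₗ[R] Z) (hg : g.comp i = 0) : ∃ s : K →ₗ[R] Z, s.comp p = g := by
  have key : ∀ x y, p x = p y → g x = g y := by
    intro x y hxy
    obtain ⟨w, hw⟩ := (h (x - y)).1 (by rw [map_sub, hxy, sub_self])
    have := LinearMap.congr_fun hg w
    rw [LinearMap.comp_apply, hw, map_sub] at this
    exact sub_eq_zero.1 this
  have hs : ∀ k, p (Function.surjInv hp k) = k := Function.surjInv_eq hp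
  refine ⟨{ toFun := fun k => g (Function.surjInv hp k), map_add' := ?_, map_smul' := ?_ }, ?_⟩
  · intro x y
    rw [← map_add]
    exact key _ _ (by rw [map_add, hs, hs, hs])
  · intro r x
    rw [RingHom.id_apply, ← map_smul]
    exact key _ _ (by rw [map_smul, hs, hs])
  · ext x
    exact key _ _ (hs _)

lemma lift_ex {Y P K Z : Type u} [AddCommGroup Y] [AddCommGroup P] [AddCommGroup K]
    [AddCommGroup Z] [Module R Y] [Module R P] [Module R K] [Module R Z]
    (i : Y →ₗ[R] P) (p : P →ₗ[R] K) (hi : Function.Injective i) (h : Function.Exact i p)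
    (g : Z →ₗ[R] P) (hg : p.comp g = 0) : ∃ s : Z →ₗ[R] Y, i.comp s = g := by
  have key : ∀ z, ∃ y, i y = g z := fun z => (h (g z)).1 (LinearMap.congr_fun hg z)
  choose s hs using key
  refine ⟨{ toFun := s, map_add' := ?_, map_smul' := ?_ }, ?_⟩
  · intro x y
    exact hi (by rw [map_add, hs, hs, hs, map_add])
  · intro r x
    exact hi (by rw [RingHom.id_apply, map_smul, hs, hs, map_smul])
  · ext x
    exact hs x

lemma rel_hom {A B C : Type u} [Ring A] [Ring B] [Ring C] (ψ : B →+* C) (Rel : A → B → Prop)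
    (htot : ∀ a, ∃ b, Rel a b) (hsub : ∀ a b a' b', Rel a b → Rel a' b' → Rel (a - a') (b - b'))
    (hadd : ∀ a b a' b', Rel a b → Rel a' b' → Rel (a + a') (b + b'))
    (hmul : ∀ a b a' b', Rel a b → Rel a' b' → Rel (a * a') (b * b'))
    (hone : Rel 1 1) (hz : ∀ b, Rel 0 b → ψ b = 0) :
    ∃ φ : A →+* C, ∀ a b, Rel a b → φ a = ψ b := by
  choose s hs using htot
  have key : ∀ a b, Rel a b → ψ (s a) = ψ b := by
    intro a b h
    have := hz _ (by simpa using hsub _ _ _ _ (hs a) h)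
    rw [map_sub] at this
    exact sub_eq_zero.1 this
  have h1 := key 1 1 hone
  have hzz : Rel 0 0 := by simpa using hsub _ _ _ _ hone hone
  refine ⟨{ toFun := fun a => ψ (s a), map_one' := ?_, map_mul' := ?_, map_zero' := ?_,
            map_add' := ?_ }, key⟩
  · rw [h1, map_one]
  · intro a b
    rw [← map_mul]
    exact key _ _ (hmul _ _ _ _ (hs a) (hs b))
  · rw [key _ _ hzz, map_zero]
  · intro a b
    rw [← map_add]
    exact key _ _ (hadd _ _ _ _ (hs a) (hs b))

lemma eh_free {X : ModuleCat.{u} R} {i : ℕ} (h : EH X (ModuleCat.of R R) i) (n : ℕ) :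
    EH X (ModuleCat.of R (Fin n → R)) i :=
  h.fgproj ((IsProjective.iff_projective _).1 (inferInstance : Module.Projective R (Fin n → R)))
    (inferInstance : Module.Finite R (Fin n → R))

lemma syz_psi {c : ℕ} {X : ModuleCat.{u} R} (hX : ∀ i ≤ c, EH X (ModuleCat.of R R) i)
    (n : ℕ) (hn : n ≤ c) (Y : ModuleCat.{u} R) (h : IsSyzygy R n Y X) :
    ∃ ψ : Module.End R Y →+* Module.End R X, Function.Surjective ψ ∧ ∀ f, ψ f = 0 ↔ FF f := by
  induction n generalizing Y with
  | zero =>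
    obtain ⟨e⟩ := h
    let E : Y ≃ₗ[R] X := e.toLinearEquiv
    refine ⟨(E.conjRingEquiv : Module.End R Y →+* Module.End R X), E.conjRingEquiv.surjective, ?_⟩
    intro f
    constructor
    · intro hf
      have : f = 0 := E.conjRingEquiv.injective (by rw [map_zero]; exact hf)
      exact ⟨0, 0, 0, by rw [this, LinearMap.comp_zero]⟩
    · rintro ⟨m, s, t, rfl⟩
      have h0 : s.comp E.symm.toLinearMap = 0 := eh_hom (eh_free (hX 0 hn) m) _
      have hs : s = 0 := by
        ext1 y
        have := LinearMap.congr_fun h0 (E y)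
        simpa using this
      subst hs
      rw [LinearMap.comp_zero]
      exact map_zero _
  | succ n ih =>
    obtain ⟨P, K, f, p, hP, hPf, hf, hp, hex, hK⟩ := h
    obtain ⟨ψ, hψ, hψ0⟩ := ih (by omega) K hK
    have hE : EH K (ModuleCat.of R R) 1 := eh_shift n K _ hK 1 le_rfl (hX _ (by omega))
    have hPp := (IsProjective.iff_projective P).2 hP
    have hexP := eh_extend f p hf hp hex (hE.fgproj hP hPf)
    have hexF := fun m => eh_extend f p hf hp hex (eh_free hE m)
    have hex' : Function.Exact f.hom p.hom := hex
    have hp' : Function.Surjective p.hom := hp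
    have hf' : Function.Injective f.hom := hf
    have hpf : p.hom.comp f.hom = 0 := by
      ext x; exact hex'.apply_apply_eq_zero x
    let Rel : Module.End R Y → Module.End R K → Prop := fun y k =>
      ∃ g : P →ₗ[R] P, g.comp f.hom = f.hom.comp y ∧ k.comp p.hom = p.hom.comp g
    have htot : ∀ y, ∃ k, Rel y k := by
      intro y
      obtain ⟨g, hg⟩ := hexP (f.hom.comp y)
      obtain ⟨k, hk⟩ := desc_ex f.hom p.hom hp' hex' (p.hom.comp g) (by
        rw [LinearMap.comp_assoc, hg, ← LinearMap.comp_assoc, hpf, LinearMap.zero_comp])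
      exact ⟨k, g, hg, hk⟩
    obtain ⟨φ, hφ⟩ := rel_hom ψ Rel htot
      (by
        rintro a b a' b' ⟨g, h1, h2⟩ ⟨g', h1', h2'⟩
        refine ⟨g - g', ?_, ?_⟩
        · rw [LinearMap.sub_comp, h1, h1', LinearMap.comp_sub]
        · rw [LinearMap.sub_comp, h2, h2', LinearMap.comp_sub])
      (by
        rintro a b a' b' ⟨g, h1, h2⟩ ⟨g', h1', h2'⟩
        refine ⟨g + g', ?_, ?_⟩
        · rw [LinearMap.add_comp, h1, h1', LinearMap.comp_add]
        · rw [LinearMap.add_comp, h2, h2', LinearMap.comp_add])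
      (by
        rintro a b a' b' ⟨g, h1, h2⟩ ⟨g', h1', h2'⟩
        refine ⟨g.comp g', ?_, ?_⟩
        · rw [LinearMap.comp_assoc, h1', ← LinearMap.comp_assoc, h1]; rfl
        · rw [Module.End.mul_eq_comp, LinearMap.comp_assoc, h2', ← LinearMap.comp_assoc, h2]; rfl)
      ⟨LinearMap.id, rfl, rfl⟩
      (by
        rintro b ⟨g, h1, h2⟩
        obtain ⟨s, rfl⟩ := desc_ex f.hom p.hom hp' hex' g (by rw [h1, LinearMap.comp_zero])
        rw [hψ0]
        have : b = p.hom.comp s := by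
          ext k
          obtain ⟨x, rfl⟩ := hp' k
          exact LinearMap.congr_fun h2 x
        rw [this]
        exact FF.of_proj s p.hom)
    refine ⟨φ, ?_, ?_⟩
    · intro x
      obtain ⟨k, rfl⟩ := hψ x
      obtain ⟨g, hg⟩ := Module.projective_lifting_property p.hom (k.comp p.hom) hp'
      obtain ⟨y, hy⟩ := lift_ex f.hom p.hom hf' hex' (g.comp f.hom) (by
        rw [← LinearMap.comp_assoc, hg, LinearMap.comp_assoc, hpf, LinearMap.comp_zero])
      exact ⟨y, hφ y k ⟨g, hy.symm, hg.symm⟩⟩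
    · intro y
      constructor
      · intro hy
        obtain ⟨k, g, h1, h2⟩ := htot y
        rw [hφ y k ⟨g, h1, h2⟩, hψ0] at hy
        obtain ⟨m, s, t, rfl⟩ := hy
        obtain ⟨t', rfl⟩ := Module.projective_lifting_property p.hom t hp'
        obtain ⟨w, hw⟩ := lift_ex f.hom p.hom hf' hex' (g - t'.comp (s.comp p.hom)) (by
          rw [LinearMap.comp_sub, ← h2]
          ext x; simp)
        have : y = w.comp f.hom := by
          ext x
          apply hf'
          have e1 := LinearMap.congr_fun hw (f.hom x)
          have e2 := LinearMap.congr_fun h1 x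
          have e3 := LinearMap.congr_fun hpf x
          simp only [LinearMap.comp_apply, LinearMap.sub_apply] at e1 e2 e3 ⊢
          rw [e1, e2, e3]
          simp
        rw [this]
        exact FF.of_proj f.hom w
      · rintro ⟨m, s, t, rfl⟩
        obtain ⟨s', rfl⟩ := hexF m s
        rw [hφ _ 0 ⟨f.hom.comp (t.comp s'), rfl, by
          rw [← LinearMap.comp_assoc, hpf, LinearMap.zero_comp, LinearMap.zero_comp]⟩, map_zero]

end psi

section homs
variable {R : Type u} [CommRing R]

/-- `N` lies in `add M`, in terms of finite families of maps. -/
def InAdd (R : Type u) [CommRing R] (M N : Type u) [AddCommGroup M] [AddCommGroup N]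
    [Module R M] [Module R N] : Prop :=
  ∃ (I : Type) (_ : Fintype I) (i : I → (N →ₗ[R] M)) (p : I → (M →ₗ[R] N)),
    ∀ x, ∑ l, p l (i l x) = x

lemma InAdd.trans {M N L : Type u} [AddCommGroup M] [AddCommGroup N] [AddCommGroup L]
    [Module R M] [Module R N] [Module R L] (h : InAdd R M N) (h' : InAdd R N L) :
    InAdd R M L := by
  obtain ⟨I, _, i, p, hip⟩ := h
  obtain ⟨I', _, i', p', hip'⟩ := h'
  refine ⟨I' × I, inferInstance, fun l => (i l.2).comp (i' l.1), fun l => (p' l.1).comp (p l.2), ?_⟩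
  intro x
  rw [Fintype.sum_prod_type]
  simp only [LinearMap.comp_apply, ← map_sum, hip]
  exact hip' x

lemma InAdd.of_retract {M N : Type u} [AddCommGroup M] [AddCommGroup N]
    [Module R M] [Module R N] (i : N →ₗ[R] M) (p : M →ₗ[R] N) (h : ∀ x, p (i x) = x) :
    InAdd R M N :=
  ⟨Unit, inferInstance, fun _ => i, fun _ => p, fun x => by simp [h]⟩

lemma InAdd.pi (M : Type u) [AddCommGroup M] [Module R M] (n : ℕ) :
    InAdd R M (Fin n → M) :=
  ⟨Fin n, inferInstance, fun l => LinearMap.proj l, fun l => LinearMap.single R (fun _ => M) l,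
    fun x => by
      simp only [LinearMap.proj_apply, LinearMap.coe_single]
      exact Finset.univ_sum_single x⟩

lemma InAdd.fgproj {M P : Type u} [AddCommGroup M] [AddCommGroup P]
    [Module R M] [Module R P] (h : InAdd R M R) [Module.Projective R P] [Module.Finite R P] :
    InAdd R M P := by
  obtain ⟨n, f, g, _, _, hfg⟩ := Module.Finite.exists_comp_eq_id_of_projective R P
  exact (h.trans (InAdd.pi R n)).trans (InAdd.of_retract g f (fun x => LinearMap.congr_fun hfg x))

/-- Precomposition, linear over the endomorphism ring. -/
def preC (V : Type u) [AddCommGroup V] [Module R V] {Y Z : Type u} [AddCommGroup Y] [AddCommGroup Z]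
    [Module R Y] [Module R Z] (f : Y →ₗ[R] Z) :
    (Z →ₗ[R] V) →ₗ[Module.End R V] (Y →ₗ[R] V) where
  toFun g := g.comp f
  map_add' g h := LinearMap.add_comp _ _ _
  map_smul' a g := rfl

@[simp] lemma preC_apply (V : Type u) [AddCommGroup V] [Module R V] {Y Z : Type u} [AddCommGroup Y]
    [AddCommGroup Z] [Module R Y] [Module R Z] (f : Y →ₗ[R] Z) (g : Z →ₗ[R] V) :
    preC V f g = g.comp f := rfl

lemma preC_inj (V : Type u) [AddCommGroup V] [Module R V] {Y Z : Type u} [AddCommGroup Y]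
    [AddCommGroup Z] [Module R Y] [Module R Z] (f : Y →ₗ[R] Z) (hf : Function.Surjective f) :
    Function.Injective (preC V f) := by
  intro g h hgh
  ext x
  obtain ⟨y, rfl⟩ := hf x
  exact LinearMap.congr_fun hgh y

lemma preC_exact (V : Type u) [AddCommGroup V] [Module R V] {Y P K : Type u} [AddCommGroup Y]
    [AddCommGroup P] [AddCommGroup K] [Module R Y] [Module R P] [Module R K]
    (i : Y →ₗ[R] P) (p : P →ₗ[R] K) (hp : Function.Surjective p) (h : Function.Exact i p) :
    Function.Exact (preC V p) (preC V i) := by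
  intro g
  constructor
  · intro hg
    exact desc_ex i p hp h g hg
  · rintro ⟨s, rfl⟩
    ext x
    simp [h.apply_apply_eq_zero x]

lemma homProj {V Y : Type u} [AddCommGroup V] [Module R V] [AddCommGroup Y] [Module R Y]
    (h : InAdd R V Y) : Module.Projective (Module.End R V) (Y →ₗ[R] V) := by
  obtain ⟨I, _, i, p, hip⟩ := h
  refine Module.Projective.of_split (P := Y →ₗ[R] V) (M := I → Module.End R V)
    (LinearMap.pi fun l => preC V (p l))
    (∑ l, (preC V (i l)).comp (LinearMap.proj l : (I → Module.End R V) →ₗ[Module.End R V] Module.End R V)) ?_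
  ext f x
  simp only [LinearMap.comp_apply, LinearMap.sum_apply, LinearMap.proj_apply, LinearMap.pi_apply,
    preC_apply, LinearMap.id_apply]
  rw [← map_sum, hip]

variable (R) in
/-- The corner of `End (M × W)` given by `M`. -/
def kap (M W : Type u) [AddCommGroup M] [Module R M] [AddCommGroup W] [Module R W] :
    CornerMap (Module.End R M) (Module.End R (M × W)) where
  φ := { toFun := fun f => (LinearMap.inl R M W).comp (f.comp (LinearMap.fst R M W))
         map_mul' := fun f g => by ext <;> simp
         map_zero' := by ext <;> simp
         map_add' := fun f g => by ext <;> simp }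
  inj := by
    intro f g h
    ext x
    exact congrArg Prod.fst (LinearMap.congr_fun h (x, 0))
  corner := by
    intro a
    refine ⟨(LinearMap.fst R M W).comp (a.comp (LinearMap.inl R M W)), ?_⟩
    exact LinearMap.ext fun x => rfl

lemma kap_e_apply (M W : Type u) [AddCommGroup M] [Module R M] [AddCommGroup W] [Module R W]
    (x : M × W) : (kap R M W).e x = (x.1, 0) := rfl

lemma kap_e_smul (M W Y : Type u) [AddCommGroup M] [Module R M] [AddCommGroup W] [Module R W]
    [AddCommGroup Y] [Module R Y] (f : Y →ₗ[R] M × W) (y : Y) :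
    ((kap R M W).e • f) y = ((f y).1, 0) := rfl

lemma isAddE_hom (M W P : Type u) [AddCommGroup M] [Module R M] [AddCommGroup W] [Module R W]
    [AddCommGroup P] [Module R P] (h : InAdd R M P) : IsAddE (kap R M W) (P →ₗ[R] M × W) := by
  have hM : InAdd R (M × W) M := InAdd.of_retract (LinearMap.inl R M W) (LinearMap.fst R M W)
    (fun x => rfl)
  refine ⟨homProj (hM.trans h), ?_⟩
  obtain ⟨I, _, i, p, hip⟩ := h
  rw [eq_top_iff]
  intro f _
  have : f = ∑ l, ((f.comp ((p l).comp (LinearMap.fst R M W)) : Module.End R (M × W)) •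
      ((LinearMap.inl R M W).comp (i l))) := by
    ext1 x
    rw [LinearMap.sum_apply]
    conv_lhs => rw [← hip x, map_sum]
    rfl
  rw [this]
  refine Submodule.sum_mem _ fun l _ => Submodule.smul_mem _ _ (Submodule.subset_span ?_)
  rfl

end homs

section mainsec
variable {R : Type u} [CommRing R]

lemma hom_syz_zero {X Y Z : ModuleCat.{u} R} (h : IsSyzygy R 0 Y X) (hE : EH X Z 0)
    (f : Y →ₗ[R] Z) : f = 0 := by
  obtain ⟨e⟩ := h
  have h0 : f.comp e.toLinearEquiv.symm.toLinearMap = 0 := eh_hom hE _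
  ext y
  have := LinearMap.congr_fun h0 (e.toLinearEquiv y)
  simpa using this

lemma genPres_hom {c : ℕ} {X M W : ModuleCat.{u} R} (hadd : InAdd R M R)
    (hXM : ∀ i ≤ c, EH X M i) (hXW : ∀ i < c, EH X W i) (n : ℕ) (hn : n < c)
    (Y : ModuleCat.{u} R) (h : IsSyzygy R n Y X) (m : ℕ) :
    GenPres (kap R M W) m (Y →ₗ[R] M × W) := by
  induction n generalizing Y m with
  | zero =>
    apply genPres_zero
    refine subsingleton_of_forall_eq 0 fun f => ?_
    have h1 := hom_syz_zero h (hXM 0 (by omega)) ((LinearMap.fst R M W).comp f)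
    have h2 := hom_syz_zero h (hXW 0 (by omega)) ((LinearMap.snd R M W).comp f)
    ext y
    · exact LinearMap.congr_fun h1 y
    · exact LinearMap.congr_fun h2 y
  | succ n ih =>
    cases m with
    | zero => trivial
    | succ m =>
      obtain ⟨P, K, f, p, hP, hPf, hf, hp, hex, hK⟩ := h
      have hPp := (IsProjective.iff_projective P).2 hP
      have hEM : EH K M 1 := eh_shift n K _ hK 1 le_rfl (hXM _ (by omega))
      have hEW : EH K W 1 := eh_shift n K _ hK 1 le_rfl (hXW _ (by omega))
      refine ⟨P →ₗ[R] M × W, K →ₗ[R] M × W, inferInstance, inferInstance, inferInstance,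
        inferInstance, preC _ p.hom, preC _ f.hom, isAddE_hom M W P hadd.fgproj,
        preC_inj _ _ hp, ?_, preC_exact _ _ _ hp hex, ih (by omega) K hK m⟩
      intro s
      obtain ⟨t1, ht1⟩ := eh_extend f p hf hp hex hEM ((LinearMap.fst R M W).comp s)
      obtain ⟨t2, ht2⟩ := eh_extend f p hf hp hex hEW ((LinearMap.snd R M W).comp s)
      refine ⟨t1.prod t2, ?_⟩
      ext y
      · exact LinearMap.congr_fun ht1 y
      · exact LinearMap.congr_fun ht2 y

lemma ff_WM {c : ℕ} {X M W : ModuleCat.{u} R} (hXM : ∀ i ≤ c, EH X M i)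
    (hW : IsSyzygy R c W X) (f : W →ₗ[R] M) : FF f := by
  cases c with
  | zero => exact ⟨0, 0, 0, by rw [hom_syz_zero hW (hXM 0 le_rfl) f, LinearMap.comp_zero]⟩
  | succ c =>
    obtain ⟨P, K, g, p, hP, hPf, hg, hp, hex, hK⟩ := hW
    have hPp := (IsProjective.iff_projective P).2 hP
    have hEM : EH K M 1 := eh_shift c K _ hK 1 le_rfl (hXM _ (by omega))
    obtain ⟨t, rfl⟩ := eh_extend g p hg hp hex hEM f
    exact FF.of_proj g.hom t

lemma psi_split {M W X : Type u} [AddCommGroup M] [Module R M] [AddCommGroup W] [Module R W]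
    [AddCommGroup X] [Module R X] (ψ : Module.End R W →+* Module.End R X)
    (hψ0 : ∀ f, ψ f = 0 ↔ FF f) (hWM : ∀ f : W →ₗ[R] M, FF f)
    (a : Module.End R (M × W)) (f : W →ₗ[R] M × W) :
    ψ ((LinearMap.snd R M W).comp (a.comp f)) =
      ψ ((LinearMap.snd R M W).comp (a.comp (LinearMap.inr R M W))) *
        ψ ((LinearMap.snd R M W).comp f) := by
  have h1 : (LinearMap.snd R M W).comp (a.comp f) =
      ((LinearMap.snd R M W).comp (a.comp (LinearMap.inr R M W))) *
        ((LinearMap.snd R M W).comp f) +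
      ((LinearMap.snd R M W).comp (a.comp (LinearMap.inl R M W))).comp
        ((LinearMap.fst R M W).comp f) := by
    ext x
    have : f x = (0, (f x).2) + ((f x).1, 0) := by simp
    simp only [LinearMap.comp_apply, LinearMap.add_apply, Module.End.mul_apply]
    conv_lhs => rw [this, map_add, map_add]
    rfl
  rw [h1, map_add, (hψ0 _).2 ((hWM _).comp_left _), add_zero, map_mul]

/-- The ring map `End (M × W) → End X`. -/
def bigPsi {M W X : Type u} [AddCommGroup M] [Module R M] [AddCommGroup W] [Module R W]
    [AddCommGroup X] [Module R X] (ψ : Module.End R W →+* Module.End R X)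
    (hψ0 : ∀ f, ψ f = 0 ↔ FF f) (hWM : ∀ f : W →ₗ[R] M, FF f) :
    Module.End R (M × W) →+* Module.End R X where
  toFun a := ψ ((LinearMap.snd R M W).comp (a.comp (LinearMap.inr R M W)))
  map_one' := by
    rw [← map_one ψ]; rfl
  map_mul' a b := psi_split ψ hψ0 hWM a (b.comp (LinearMap.inr R M W))
  map_zero' := by
    rw [← map_zero ψ]; rfl
  map_add' a b := by
    rw [← map_add ψ]; rfl

lemma bigPsi_apply {M W X : Type u} [AddCommGroup M] [Module R M] [AddCommGroup W] [Module R W]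
    [AddCommGroup X] [Module R X] (ψ : Module.End R W →+* Module.End R X)
    (hψ0 : ∀ f, ψ f = 0 ↔ FF f) (hWM : ∀ f : W →ₗ[R] M, FF f) (a : Module.End R (M × W)) :
    bigPsi ψ hψ0 hWM a = ψ ((LinearMap.snd R M W).comp (a.comp (LinearMap.inr R M W))) := rfl

lemma bigPsi_surj {M W X : Type u} [AddCommGroup M] [Module R M] [AddCommGroup W] [Module R W]
    [AddCommGroup X] [Module R X] (ψ : Module.End R W →+* Module.End R X)
    (hψ : Function.Surjective ψ)
    (hψ0 : ∀ f, ψ f = 0 ↔ FF f) (hWM : ∀ f : W →ₗ[R] M, FF f) :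
    Function.Surjective (bigPsi ψ hψ0 hWM) := by
  intro x
  obtain ⟨w, rfl⟩ := hψ x
  exact ⟨(LinearMap.inr R M W).comp (w.comp (LinearMap.snd R M W)), rfl⟩

lemma bigPsi_ker {M W X : Type u} [AddCommGroup M] [Module R M] [AddCommGroup W] [Module R W]
    [AddCommGroup X] [Module R X] (hadd : InAdd R M R) (ψ : Module.End R W →+* Module.End R X)
    (hψ0 : ∀ f, ψ f = 0 ↔ FF f) (hWM : ∀ f : W →ₗ[R] M, FF f)
    (H : Type u) [AddCommGroup H] [Module (Module.End R (M × W)) H]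
    (hH : ∀ x : H, (kap R M W).e • x = 0) (a : Module.End R (M × W))
    (ha : bigPsi ψ hψ0 hWM a = 0) (x : H) : a • x = 0 := by
  rw [bigPsi_apply, hψ0] at ha
  obtain ⟨n, s, t, hst⟩ := ha
  obtain ⟨I, _, i, p, hip⟩ := hadd.trans (InAdd.pi R n)
  let e := (kap R M W).e
  have hea : ∀ b : Module.End R (M × W), ∀ x : H, (e * b) • x = 0 := fun b x => by
    rw [mul_smul]; exact hH _
  have hae : ∀ b : Module.End R (M × W), ∀ x : H, (b * e) • x = 0 := fun b x => by
    rw [mul_smul]; exact (congrArg (b • ·) (hH x)).trans (smul_zero b)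
  let L : I → Module.End R (M × W) := fun l =>
    (LinearMap.inr R M W).comp (t.comp ((p l).comp (LinearMap.fst R M W)))
  let N : I → Module.End R (M × W) := fun l =>
    (LinearMap.inl R M W).comp ((i l).comp (s.comp (LinearMap.snd R M W)))
  let b : Module.End R (M × W) := (LinearMap.inr R M W).comp ((LinearMap.snd R M W).comp a)
  have h1 : a = e * a + b * e + ∑ l, (L l * e) * (N l) := by
    refine LinearMap.ext fun v => ?_
    have h2 : (∑ l, (L l * e) * (N l)) v = (0, (a (0, v.2)).2) := by
      rw [LinearMap.sum_apply]
      have h3 : ∀ l, ((L l * e) * (N l)) v = LinearMap.inr R M W (t (p l (i l (s v.2)))) :=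
        fun l => rfl
      simp only [h3, ← map_sum, hip]
      exact congrArg (fun w => ((0 : M), w)) (LinearMap.congr_fun hst v.2)
    rw [LinearMap.add_apply, LinearMap.add_apply, h2]
    have h4 : (b * e) v = (0, (a (v.1, 0)).2) := rfl
    have h5 : (e * a) v = ((a v).1, 0) := rfl
    rw [h4, h5]
    have h6 : v = (v.1, 0) + (0, v.2) := by simp
    ext
    · simp
    · conv_lhs => rw [h6, map_add]
      simp
  rw [h1, add_smul, add_smul, hea, hae, Finset.sum_smul]
  simp only [mul_smul (L _ * e), hae]
  simp

lemma pd_hp {M W X : Type u} [AddCommGroup M] [Module R M] [AddCommGroup W] [Module R W]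
    [AddCommGroup X] [Module R X] (hadd : InAdd R M R) (ψ : Module.End R W →+* Module.End R X)
    (hψ : Function.Surjective ψ)
    (hψ0 : ∀ f, ψ f = 0 ↔ FF f) (hWM : ∀ f : W →ₗ[R] M, FF f)
    {a b : ℕ} (hb : gldimLE (Module.End R X) b) [Module (Module.End R (M × W)) (Module.End R X)]
    (hAC : ∀ (a : Module.End R (M × W)) (x : Module.End R X), a • x = bigPsi ψ hψ0 hWM a * x)
    (hq : PD (Module.End R (M × W)) (Module.End R X) a)
    (H : Type u) [AddCommGroup H] [Module (Module.End R (M × W)) H]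
    (hH : ∀ x : H, (kap R M W).e • x = 0) : PD (Module.End R (M × W)) H (b + a) := by
  have hs := bigPsi_surj ψ hψ hψ0 hWM
  let g : Module.End R X →+* AddMonoid.End H :=
    (bigPsi ψ hψ0 hWM).liftOfSurjective hs
      ⟨Module.toAddMonoidEnd (Module.End R (M × W)) H, by
        intro x hx
        rw [RingHom.mem_ker] at hx ⊢
        ext h
        exact bigPsi_ker hadd ψ hψ0 hWM H hH x hx h⟩
  letI : Module (Module.End R X) H := Module.compHom H g
  refine pd_change (bigPsi ψ hψ0 hWM) hAC hq b H ?_ (gldim_pd hb H)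
  intro a x
  have : g (bigPsi ψ hψ0 hWM a) = Module.toAddMonoidEnd (Module.End R (M × W)) H a :=
    RingHom.liftOfRightInverse_comp_apply _ _ _ _ _
  change a • x = g (bigPsi ψ hψ0 hWM a) x
  rw [this]
  rfl

end mainsec

section final
variable {R : Type u} [CommRing R]

/-- The map `Hom(W, M × W) → End X`. -/
def qMap {M W X : Type u} [AddCommGroup M] [Module R M] [AddCommGroup W] [Module R W]
    [AddCommGroup X] [Module R X] (ψ : Module.End R W →+* Module.End R X)
    (hψ0 : ∀ f, ψ f = 0 ↔ FF f) (hWM : ∀ f : W →ₗ[R] M, FF f)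
    [Module (Module.End R (M × W)) (Module.End R X)]
    (hAC : ∀ (a : Module.End R (M × W)) (x : Module.End R X), a • x = bigPsi ψ hψ0 hWM a * x) :
    (W →ₗ[R] M × W) →ₗ[Module.End R (M × W)] Module.End R X where
  toFun f := ψ ((LinearMap.snd R M W).comp f)
  map_add' f g := by rw [LinearMap.comp_add, map_add]
  map_smul' a f := by
    rw [RingHom.id_apply, hAC]
    exact psi_split ψ hψ0 hWM a f

lemma qMap_apply {M W X : Type u} [AddCommGroup M] [Module R M] [AddCommGroup W] [Module R W]
    [AddCommGroup X] [Module R X] (ψ : Module.End R W →+* Module.End R X)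
    (hψ0 : ∀ f, ψ f = 0 ↔ FF f) (hWM : ∀ f : W →ₗ[R] M, FF f)
    [Module (Module.End R (M × W)) (Module.End R X)]
    (hAC : ∀ (a : Module.End R (M × W)) (x : Module.End R X), a • x = bigPsi ψ hψ0 hWM a * x)
    (f : W →ₗ[R] M × W) :
    qMap ψ hψ0 hWM hAC f = ψ ((LinearMap.snd R M W).comp f) := rfl

/-- Injection of corners for `a ≥ 1`. -/
lemma pd_sub {B : Type u} [Ring B] {a : ℕ} (ha : gldimLE B (a+1)) {E T : Type u} [AddCommGroup E]
    [Module B E] [AddCommGroup T] [Module B T] (hT : Module.Projective B T) (f : E →ₗ[B] T)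
    (hf : Function.Injective f) : PD B E a :=
  pd_left f (LinearMap.range f).mkQ hf (Submodule.mkQ_surjective _)
    (LinearMap.exact_map_mkQ_range f) (pd_of_proj hT a) (gldim_pd ha _)

lemma retr_ss {B : Type u} [Ring B] (ha : gldimLE B 0) {E T : Type u} [AddCommGroup E]
    [Module B E] [AddCommGroup T] [Module B T] (f : E →ₗ[B] T)
    (hf : Function.Injective f) : ∃ r : T →ₗ[B] E, ∀ x, r (f x) = x := by
  have hQ : Module.Projective B (T ⧸ LinearMap.range f) := pd_zero_iff.1 (gldim_pd ha _)
  have hs := Module.projective_lifting_property (LinearMap.range f).mkQ LinearMap.id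
    (Submodule.mkQ_surjective _)
  have h := ((LinearMap.exact_map_mkQ_range f).split_tfae hf (Submodule.mkQ_surjective _)).out 0 1
  obtain ⟨r, hr⟩ := h.1 hs
  exact ⟨r, fun x => LinearMap.congr_fun hr x⟩

lemma pdC {c : ℕ} [IsNoetherianRing R] {X M W : ModuleCat.{u} R} (hadd : InAdd R M R)
    (hXR : ∀ i ≤ c, EH X (ModuleCat.of R R) i)
    (hXM : ∀ i ≤ c, EH X M i) (hXW : ∀ i < c, EH X W i) (hW : IsSyzygy R c W X)
    (ψ : Module.End R W →+* Module.End R X) (hψ : Function.Surjective ψ)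
    (hψ0 : ∀ f, ψ f = 0 ↔ FF f) (hWM : ∀ f : W →ₗ[R] M, FF f)
    {a : ℕ} (ha : gldimLE (Module.End R M) a)
    [Module (Module.End R (M × W)) (Module.End R X)]
    (hAC : ∀ (a : Module.End R (M × W)) (x : Module.End R X), a • x = bigPsi ψ hψ0 hWM a * x) :
    PD (Module.End R (M × W)) (Module.End R X) a := by
  let q := qMap ψ hψ0 hWM hAC
  have hq0 : ∀ f, q f = 0 ↔ FF ((LinearMap.snd R M W).comp f) := fun f => hψ0 _
  have hqs : Function.Surjective q := by
    intro x
    obtain ⟨w, rfl⟩ := hψ x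
    exact ⟨(LinearMap.inr R M W).comp w, rfl⟩
  have hN : Module.Projective (Module.End R (M × W)) (W →ₗ[R] M × W) :=
    homProj (InAdd.of_retract (LinearMap.inr R M W) (LinearMap.snd R M W) (fun x => rfl))
  let κ := kap R M W
  cases c with
  | zero =>
    have hqi : Function.Injective q := by
      rw [injective_iff_map_eq_zero]
      intro f hf
      rw [hq0] at hf
      obtain ⟨n, s, t, hst⟩ := hf
      have h0 : s = 0 := hom_syz_zero (Z := ModuleCat.of R (Fin n → R)) hW
        (eh_free (hXR 0 le_rfl) n) s
      have h1 := hom_syz_zero hW (hXM 0 (by omega)) ((LinearMap.fst R M W).comp f)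
      subst h0
      ext y
      · exact LinearMap.congr_fun h1 y
      · exact (LinearMap.congr_fun hst y).symm.trans (by simp)
    exact pd_of_proj (Module.Projective.of_equiv (LinearEquiv.ofBijective q ⟨hqi, hqs⟩)) _
  | succ c =>
    obtain ⟨P, Y, f, p, hP, hPf, hf, hp, hex, hY⟩ := hW
    have hPp := (IsProjective.iff_projective P).2 hP
    have hf' : Function.Injective f.hom := hf
    have hPadd : InAdd R M P := hadd.fgproj
    have hWf : Module.Finite R W := Module.Finite.of_injective f.hom hf'
    obtain ⟨n, g, hg⟩ := Module.Finite.exists_fin' R W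
    have hT : IsAddE κ ((Fin n → R) →ₗ[R] M × W) :=
      isAddE_hom M W (Fin n → R) (hadd.trans (InAdd.pi R n))
    let j : (W →ₗ[R] M × W) →ₗ[Module.End R (M × W)] ((Fin n → R) →ₗ[R] M × W) := preC _ g
    have hj : Function.Injective j := preC_inj _ g hg
    cases a with
    | zero =>
      obtain ⟨r, hr⟩ := retr_ss ha (EP.map κ j) (EP.map_inj κ j hj)
      obtain ⟨ρ, hρ⟩ := hT.lift r
      have hρj : ∀ x, κ.e • x = x → ρ (j x) = x := by
        intro x hx
        obtain ⟨x, rfl⟩ : ∃ x' : EP κ (W →ₗ[R] M × W), x'.1 = x := ⟨⟨x, hx⟩, rfl⟩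
        have := hρ (EP.map κ j x)
        rw [hr, EP.map_val] at this
        exact this
      have hall : ∀ x, ρ (j x) = x := by
        intro x
        rw [← sub_eq_zero]
        have key : ∀ θ : (M × W) →ₗ[R] M, θ.comp (ρ (j x) - x) = 0 := by
          intro θ
          let b : Module.End R (M × W) := (LinearMap.inl R M W).comp θ
          have h1 : ρ (j (b • x)) = b • x := hρj _ rfl
          have h2 : b • (ρ (j x) - x) = 0 := by
            rw [smul_sub, ← map_smul, ← map_smul, h1, sub_self]
          ext w
          exact congrArg Prod.fst (LinearMap.congr_fun h2 w)
        obtain ⟨I, _, i, p', hip⟩ := hPadd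
        refine LinearMap.ext fun w => ?_
        have hk : ∀ θ : (M × W) →ₗ[R] M, θ ((ρ (j x) - x) w) = 0 :=
          fun θ => LinearMap.congr_fun (key θ) w
        generalize (ρ (j x) - x) w = v at hk
        have h2 : f.hom v.2 = 0 := by
          rw [← hip (f.hom v.2)]
          refine Finset.sum_eq_zero fun l _ => ?_
          have := hk ((i l).comp (f.hom.comp (LinearMap.snd R M W)))
          simp only [LinearMap.comp_apply, LinearMap.snd_apply] at this
          rw [this, map_zero]
        have h3 : v.2 = 0 := hf' (by rw [h2, map_zero])
        exact Prod.ext (hk (LinearMap.fst R M W)) h3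
      have hqρ : q.comp ρ = 0 := by
        apply hT.ext
        intro t ht
        rw [LinearMap.comp_apply, LinearMap.zero_apply, hq0]
        have h1 : κ.e • ρ t = ρ t := by rw [← map_smul, ht]
        have : (LinearMap.snd R M W).comp (ρ t) = 0 := by
          rw [← h1]; rfl
        rw [this]
        exact ⟨0, 0, 0, LinearMap.comp_zero _⟩
      have : Subsingleton (Module.End R X) := by
        refine subsingleton_of_forall_eq 0 fun x => ?_
        obtain ⟨y, rfl⟩ := hqs x
        rw [← hall y]
        exact LinearMap.congr_fun hqρ (j y)
      rw [pd_zero_iff]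
      infer_instance
    | succ a =>
      let K := LinearMap.ker q
      have hEYM : EH Y M 1 := eh_shift c Y _ hY 1 le_rfl (hXM _ (by omega))
      have hEYR : EH Y (ModuleCat.of R R) 1 := eh_shift c Y _ hY 1 le_rfl (hXR _ (by omega))
      have hGP : GenPres κ (a+2) K := by
        refine ⟨P →ₗ[R] M × W, Y →ₗ[R] M × W, inferInstance, inferInstance, inferInstance,
          inferInstance, preC _ p.hom, (preC _ f.hom).codRestrict K ?_, isAddE_hom M W P hPadd,
          preC_inj _ _ hp, ?_, ?_,
          genPres_hom hadd hXM hXW c (by omega) Y hY (a+1)⟩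
        · intro s
          rw [LinearMap.mem_ker, hq0]
          exact FF.of_proj f.hom ((LinearMap.snd R M W).comp s)
        · rintro ⟨s, hs⟩
          obtain ⟨m, s', t', hst⟩ := (hq0 s).1 hs
          obtain ⟨t1, ht1⟩ := eh_extend f p hf hp hex hEYM ((LinearMap.fst R M W).comp s)
          obtain ⟨t2, ht2⟩ := eh_extend f p hf hp hex (eh_free hEYR m) s'
          refine ⟨t1.prod (t'.comp t2), Subtype.ext ?_⟩
          ext y
          · exact LinearMap.congr_fun ht1 y
          · exact (congrArg t' (LinearMap.congr_fun ht2 y)).trans (LinearMap.congr_fun hst y)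
        · intro s
          rw [← preC_exact (M × W) f.hom p.hom hp hex s]
          exact Subtype.ext_iff
      have hE : PD (Module.End R M) (EP κ K) a :=
        pd_sub ha hT.proj (EP.map κ (j.comp K.subtype))
          (EP.map_inj κ _ (hj.comp Subtype.val_injective))
      have hK : PD (Module.End R (M × W)) K a := genPres_pd κ a K hGP hE
      exact pd_right K.subtype q Subtype.val_injective hqs (LinearMap.exact_subtype_ker_map q)
        hK (pd_of_proj hN _)

end final

/-- If `M` is a `d`-torsionfree generator giving an NCR and `gldim End_R(X)` is finite,
then for `c < min(d, grade X)`,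
`gldim End_R(M ⊕ Ω^c X) ≤ 2 gldim End_R(M) + gldim End_R(X) + 1`. -/
theorem stmt8 (R : Type u) [CommRing R] [IsNoetherianRing R] (d c : ℕ) (hcd : c < d)
    (M X : ModuleCat.{u} R) [Module.Finite R M] [Module.Finite R X]
    (hM : IsTorsionFree R d M)
    (hgen : MemAdd R M (ModuleCat.of R R))
    (hgrade : ∀ i ≤ c, extZero R i X (ModuleCat.of R R))
    (W : ModuleCat.{u} R) (hW : IsSyzygy R c W X)
    (a b : ℕ) (ha : gldimLE (Module.End R M) a) (hb : gldimLE (Module.End R X) b) :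
    gldimLE (Module.End R (M × W)) (2 * a + b + 1) := by
  obtain ⟨N, _, _, hMN⟩ := hM
  have hXR : ∀ i ≤ c, EH X (ModuleCat.of R R) i := fun i hi => (hgrade i hi).eh
  have hXM : ∀ i ≤ c, EH X M i := fun i hi => eh_syz hXR d M N hMN i hi (by omega)
  have hXW : ∀ i < c, EH X W i := fun i hi => eh_syz hXR c W X hW i hi.le hi
  have hadd : InAdd R M R := by
    obtain ⟨k, i, p, hip⟩ := hgen
    exact (InAdd.pi M k).trans (InAdd.of_retract i p (fun x => LinearMap.congr_fun hip x))
  obtain ⟨ψ, hψ, hψ0⟩ := syz_psi hXR c le_rfl W hW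
  have hWM : ∀ f : W →ₗ[R] M, FF f := ff_WM hXM hW
  letI : Module (Module.End R (M × W)) (Module.End R X) :=
    Module.compHom _ (bigPsi ψ hψ0 hWM)
  have hAC : ∀ (a : Module.End R (M × W)) (x : Module.End R X),
      a • x = bigPsi ψ hψ0 hWM a * x := fun _ _ => rfl
  have hC := pdC hadd hXR hXM hXW hW ψ hψ hψ0 hWM ha hAC
  intro F
  rw [pdLE_iff]
  have h := lemA (kap R M W) (p := b + a)
    (fun H _ _ hH => pd_hp hadd ψ hψ hψ0 hWM hb hAC hC H hH) a F (gldim_pd ha _)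
  exact h.mono (by omega)
end
end

section
/- Let R be a commutative noetherian ring, M a finitely generated d-torsionfree R-module with R ∈ add M, and X a finitely generated R-module with grade_R X > c for some 0 ≤ c < d. Let A = End_R(M ⊕ Ω^c X) and let e ∈ A be the idempotent projecting onto the summand M. Then the quotient ring A/AeA is isomorphic to End_R(X). -/
open CategoryTheory
universe u
noncomputable section

/-- The left `A`-module structure on the quotient of `A` by a two-sided ideal. -/
def quotSpanModule (A : Type u) [Ring A] (I : TwoSidedIdeal A) :
    Module A I.ringCon.Quotient :=
  Module.compHom _ I.ringCon.mk'

theorem ext_bridge {R : Type u} [CommRing R] {i : ℕ} {X Y : ModuleCat.{u} R}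
    (h : extZero R i X Y) : Subsingleton (Abelian.Ext X Y i) := by
  let P := projectiveResolution X
  have h1 : Limits.IsZero ((P.complex.linearYonedaObj R Y).homology i) := by
    refine Limits.IsZero.of_iso ?_ (P.isoExt i Y).symm
    unfold extZero at h
    exact ModuleCat.isZero_of_subsingleton _
  rw [← HomologicalComplex.exactAt_iff_isZero_homology] at h1
  refine subsingleton_of_forall_eq 0 fun α => ?_
  obtain ⟨f, hf, rfl⟩ := P.extMk_surjective α (i+1) rfl
  cases i with
  | zero =>
    rw [HomologicalComplex.exactAt_iff' _ 0 0 1 (by simp) (by simp),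
      ShortComplex.moduleCat_exact_iff] at h1
    obtain ⟨g, hg⟩ := h1 f hf
    have h0 : (P.complex.linearYonedaObj R Y).d 0 0 = 0 :=
      HomologicalComplex.shape _ _ _ (by simp)
    have : f = 0 := by
      rw [← hg]
      change (P.complex.linearYonedaObj R Y).d 0 0 g = 0
      rw [h0]; rfl
    subst this
    simp
  | succ i =>
    rw [HomologicalComplex.exactAt_iff' _ i (i+1) (i+1+1) (by simp) (by simp),
      ShortComplex.moduleCat_exact_iff] at h1
    obtain ⟨g, hg⟩ := h1 f hf
    rw [P.extMk_eq_zero_iff f _ _ hf i rfl]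
    exact ⟨g, hg⟩

theorem shortExact_mk {R : Type u} [CommRing R] {W P K : ModuleCat.{u} R}
    (f : W ⟶ P) (p : P ⟶ K) (hf : Function.Injective f) (hp : Function.Surjective p)
    (hfp : Function.Exact f p) (w : f ≫ p = 0) : (ShortComplex.mk f p w).ShortExact := by
  have : Mono f := (ModuleCat.mono_iff_injective f).2 hf
  have : Epi p := (ModuleCat.epi_iff_surjective p).2 hp
  exact ShortComplex.ShortExact.mk ((ShortComplex.moduleCat_exact_iff _).2 fun x hx => (hfp x).1 hx)

theorem ext_shift {R : Type u} [CommRing R] {Y : ModuleCat.{u} R} (n : ℕ) :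
    ∀ (i : ℕ) (K X : ModuleCat.{u} R), IsSyzygy R n K X →
    Subsingleton (Abelian.Ext X Y (n+i+1)) → Subsingleton (Abelian.Ext K Y (i+1)) := by
  induction n with
  | zero => 
    rintro i K X ⟨e⟩ h
    rw [zero_add] at h
    refine subsingleton_of_forall_eq 0 fun α => ?_
    have h1 : (Abelian.Ext.mk₀ e.hom).comp ((Abelian.Ext.mk₀ e.inv).comp α (zero_add _)) (zero_add _) = α := by
      rw [Abelian.Ext.mk₀_comp_mk₀_assoc]; simp
    rw [← h1, Subsingleton.elim ((Abelian.Ext.mk₀ e.inv).comp α (zero_add _)) 0, Abelian.Ext.comp_zero]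
  | succ n ih =>
    rintro i W X ⟨P, K, f, p, hP, hPf, hf, hp, hfp, hK⟩ h
    have := ih (i+1) K X hK (by convert h using 2; omega)
    have w : f ≫ p = 0 := by ext x; exact hfp.apply_apply_eq_zero x
    have hS := shortExact_mk f p hf hp hfp w
    refine subsingleton_of_forall_eq 0 fun α => ?_
    have := Abelian.Ext.contravariant_sequence_exact₁ hS Y α (n₁ := i+1+1) (by omega) (Subsingleton.elim _ _)
    obtain ⟨y, rfl⟩ := this
    rw [Abelian.Ext.eq_zero_of_projective y, Abelian.Ext.comp_zero]

theorem ext_extend {R : Type u} [CommRing R] {Y : ModuleCat.{u} R} {W P K : ModuleCat.{u} R}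
    (f : W ⟶ P) (p : P ⟶ K) (hf : Function.Injective f) (hp : Function.Surjective p)
    (hfp : Function.Exact f p) (h : Subsingleton (Abelian.Ext K Y 1)) (g : W ⟶ Y) :
    ∃ g' : P ⟶ Y, f ≫ g' = g := by
  have w : f ≫ p = 0 := by ext x; exact hfp.apply_apply_eq_zero x
  have hS := shortExact_mk f p hf hp hfp w
  obtain ⟨y, hy⟩ := Abelian.Ext.contravariant_sequence_exact₁ hS Y (Abelian.Ext.mk₀ g) (n₁ := 1) (by omega) (Subsingleton.elim _ _)
  obtain ⟨y, rfl⟩ := (Abelian.Ext.mk₀_bijective _ _).2 y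
  refine ⟨y, ?_⟩
  rw [Abelian.Ext.mk₀_comp_mk₀] at hy
  exact (Abelian.Ext.mk₀_bijective _ _).1 hy

section lin

variable {R : Type u} [CommRing R]

/-- factoring through a finitely generated projective -/
def FP {M N : Type u} [AddCommGroup M] [AddCommGroup N] [Module R M] [Module R N]
    (f : M →ₗ[R] N) : Prop :=
  ∃ (P : Type u) (_ : AddCommGroup P) (_ : Module R P), Module.Projective R P ∧ Module.Finite R P ∧
    ∃ (g : M →ₗ[R] P) (h : P →ₗ[R] N), h.comp g = f

variable {W P K M Q L : Type u} [AddCommGroup W] [AddCommGroup P] [AddCommGroup K]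
  [AddCommGroup M] [AddCommGroup Q] [AddCommGroup L]
  [Module R W] [Module R P] [Module R K] [Module R M] [Module R Q] [Module R L]

theorem descend {i : W →ₗ[R] P} {p : P →ₗ[R] K} (hp : Function.Surjective p)
    (hip : Function.Exact i p) (t : P →ₗ[R] L) (ht : t.comp i = 0) :
    ∃ h : K →ₗ[R] L, h.comp p = t := by
  have hk : LinearMap.ker p ≤ LinearMap.ker t := by
    intro x hx
    obtain ⟨y, rfl⟩ := (hip x).1 hx
    exact LinearMap.congr_fun ht y
  refine ⟨((LinearMap.ker p).liftQ t hk).comp (p.quotKerEquivOfSurjective hp).symm.toLinearMap, ?_⟩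
  ext x
  have : (p.quotKerEquivOfSurjective hp).symm (p x) = (LinearMap.ker p).mkQ x := by
    rw [LinearEquiv.symm_apply_eq]; rfl
  simp [this]

theorem factorInj {i : W →ₗ[R] P} {p : P →ₗ[R] K} (hi : Function.Injective i)
    (hip : Function.Exact i p) (t : L →ₗ[R] P) (ht : p.comp t = 0) :
    ∃ h : L →ₗ[R] W, i.comp h = t := by
  have h1 : ∀ x, ∃ y, i y = t x := fun x => (hip _).1 (LinearMap.congr_fun ht x)
  choose h hh using h1
  refine ⟨{ toFun := h, map_add' := fun x y => hi ?_, map_smul' := fun r x => hi ?_ }, ?_⟩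
  · simp [hh]
  · simp [hh]
  · ext x; exact hh x

/-- `i` has the extension property for maps to f.g. projectives -/
def ExtProp (i : W →ₗ[R] P) : Prop :=
  ∀ (Q : Type u) [AddCommGroup Q] [Module R Q] [Module.Projective R Q] [Module.Finite R Q]
    (g : W →ₗ[R] Q), ∃ g' : P →ₗ[R] Q, g'.comp i = g

theorem extProp_of (i : W →ₗ[R] P) (h : ∀ g : W →ₗ[R] R, ∃ g' : P →ₗ[R] R, g'.comp i = g) :
    ExtProp i := by
  intro Q _ _ _ _ g
  obtain ⟨n, a, b, -, -, hab⟩ := Module.Finite.exists_comp_eq_id_of_projective R Q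
  choose g' hg' using fun k => h ((LinearMap.proj k).comp (b.comp g))
  refine ⟨a.comp (LinearMap.pi g'), ?_⟩
  have : (LinearMap.pi g').comp i = b.comp g := by
    ext x k
    exact LinearMap.congr_fun (hg' k) x
  rw [LinearMap.comp_assoc, this, ← LinearMap.comp_assoc, hab, LinearMap.id_comp]

theorem homZero_of (h : ∀ g : W →ₗ[R] R, g = 0) [Module.Projective R Q] [Module.Finite R Q]
    (g : W →ₗ[R] Q) : g = 0 := by
  obtain ⟨n, a, b, -, -, hab⟩ := Module.Finite.exists_comp_eq_id_of_projective R Q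
  have : b.comp g = 0 := by
    ext x k
    exact LinearMap.congr_fun (h ((LinearMap.proj k).comp (b.comp g))) x
  rw [← LinearMap.id_comp g, ← hab, LinearMap.comp_assoc, this, LinearMap.comp_zero]

theorem square_down [Module.Projective R P] [Module.Finite R P]
    {i : W →ₗ[R] P} {p : P →ₗ[R] K} {j : M →ₗ[R] Q} {q : Q →ₗ[R] L}
    (hj : Function.Injective j) (hq : Function.Surjective q) (hjq : Function.Exact j q)
    (hip : Function.Exact i p)
    {f : W →ₗ[R] M} {g : P →ₗ[R] Q} {h : K →ₗ[R] L} (h1 : g.comp i = j.comp f)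
    (h2 : h.comp p = q.comp g) (hh : FP h) : FP f := by
  obtain ⟨T, _, _, hT, hTf, a, b, rfl⟩ := hh
  obtain ⟨b', hb'⟩ := Module.projective_lifting_property q b hq
  obtain ⟨v, hv⟩ := factorInj hj hjq (g - (b'.comp a).comp p) (by
    rw [LinearMap.comp_sub, ← LinearMap.comp_assoc, ← LinearMap.comp_assoc, hb', h2, sub_self])
  refine ⟨P, _, _, ‹_›, ‹_›, i, v, ?_⟩
  ext x
  apply hj
  have e1 := LinearMap.congr_fun hv (i x)
  have e2 := LinearMap.congr_fun h1 x
  simp [hip.apply_apply_eq_zero] at e1 e2 ⊢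
  rw [e1, e2]

theorem square_up [Module.Projective R Q] [Module.Finite R Q]
    {i : W →ₗ[R] P} {p : P →ₗ[R] K} {j : M →ₗ[R] Q} {q : Q →ₗ[R] L}
    (hp : Function.Surjective p) (hjq : Function.Exact j q)
    (hip : Function.Exact i p) (hE : ExtProp i)
    {f : W →ₗ[R] M} {g : P →ₗ[R] Q} {h : K →ₗ[R] L} (h1 : g.comp i = j.comp f)
    (h2 : h.comp p = q.comp g) (hf : FP f) : FP h := by
  obtain ⟨T, _, _, hT, hTf, a, b, rfl⟩ := hf
  obtain ⟨a', ha'⟩ := hE T a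
  obtain ⟨v, hv⟩ := descend hp hip (g - j.comp (b.comp a')) (by
    rw [LinearMap.sub_comp, h1, ← ha', LinearMap.comp_assoc, LinearMap.comp_assoc, sub_self])
  refine ⟨Q, _, _, ‹_›, ‹_›, v, q, ?_⟩
  ext x
  obtain ⟨y, rfl⟩ := hp x
  have e1 := congrArg q (LinearMap.congr_fun hv y)
  have e2 := LinearMap.congr_fun h2 y
  simp [hjq.apply_apply_eq_zero] at e1 e2 ⊢
  rw [e1, e2]

theorem FP.zero : FP (0 : W →ₗ[R] M) :=
  ⟨PUnit, _, _, inferInstance, inferInstance, 0, 0, by simp⟩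

theorem square_ex [Module.Projective R Q] [Module.Finite R Q]
    {i : W →ₗ[R] P} {p : P →ₗ[R] K} {j : M →ₗ[R] Q} {q : Q →ₗ[R] L}
    (hp : Function.Surjective p) (hjq : Function.Exact j q)
    (hip : Function.Exact i p) (hE : ExtProp i) (f : W →ₗ[R] M) :
    ∃ (g : P →ₗ[R] Q) (h : K →ₗ[R] L), g.comp i = j.comp f ∧ h.comp p = q.comp g := by
  obtain ⟨g, hg⟩ := hE Q (j.comp f)
  obtain ⟨h, hh⟩ := descend hp hip (q.comp g) (by
    rw [LinearMap.comp_assoc, hg, ← LinearMap.comp_assoc, hjq.linearMap_comp_eq_zero, LinearMap.zero_comp])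
  exact ⟨g, h, hg, hh⟩

theorem ring_step [Module.Projective R P] [Module.Finite R P]
    {i : W →ₗ[R] P} {p : P →ₗ[R] K} (hi : Function.Injective i) 
    (hp : Function.Surjective p) (hip : Function.Exact i p) (hE : ExtProp i)
    {B : Type u} [Ring B] (ψ : Module.End R K →+* B) (hψ : Function.Surjective ψ)
    (hker : ∀ f, ψ f = 0 ↔ FP f) : 
    ∃ φ : Module.End R W →+* B, Function.Surjective φ ∧ ∀ f, φ f = 0 ↔ FP f := by
  choose g h h1 h2 using fun f : Module.End R W => square_ex hp hip hip hE f
  have key : ∀ (f : Module.End R W) (g' : Module.End R P) (h' : Module.End R K),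
      g'.comp i = i.comp f → h'.comp p = p.comp g' → ψ (h f) = ψ h' := by
    intro f g' h' e1 e2
    rw [← sub_eq_zero, ← map_sub, hker]
    refine square_up (f := (0 : W →ₗ[R] W)) (g := g f - g') hp hip hip hE ?_ ?_ FP.zero
    · rw [LinearMap.sub_comp, h1, e1, sub_self, LinearMap.comp_zero]
    · rw [LinearMap.sub_comp, LinearMap.comp_sub, e2, h2]
  refine ⟨{ toFun := fun f => ψ (h f), map_one' := ?_, map_mul' := ?_, map_zero' := ?_, map_add' := ?_ }, ?_, ?_⟩
  · rw [key 1 1 1 rfl rfl, map_one]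
  · intro a b
    rw [← map_mul]
    apply key _ (g a * g b)
    · ext x
      have e1 := LinearMap.congr_fun (h1 b) x
      have e2 := LinearMap.congr_fun (h1 a) (b x)
      simp at e1 e2 ⊢
      rw [e1, e2]
    · ext x
      have e1 := LinearMap.congr_fun (h2 b) x
      have e2 := LinearMap.congr_fun (h2 a) (g b x)
      simp at e1 e2 ⊢
      rw [e1, e2]
  · rw [key 0 0 0 (by simp) (by simp), map_zero]
  · intro a b
    rw [← map_add]
    apply key _ (g a + g b)
    · rw [LinearMap.add_comp, h1, h1, LinearMap.comp_add]
    · rw [LinearMap.add_comp, h2, h2, LinearMap.comp_add]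
  · intro b
    obtain ⟨k, rfl⟩ := hψ b
    obtain ⟨g', hg'⟩ := Module.projective_lifting_property p (k.comp p) hp
    obtain ⟨f, hf⟩ := factorInj hi hip (g'.comp i) (by
      rw [← LinearMap.comp_assoc, hg', LinearMap.comp_assoc, hip.linearMap_comp_eq_zero, LinearMap.comp_zero])
    exact ⟨f, key f g' k hf.symm hg'.symm⟩
  · intro f
    change ψ (h f) = 0 ↔ _
    rw [hker]
    exact ⟨square_down hi hp hip hip (h1 f) (h2 f), square_up hp hip hip hE (h1 f) (h2 f)⟩

end lin

theorem extProp_syz {R : Type u} [CommRing R] {n : ℕ} {W P K X : ModuleCat.{u} R} (i : W ⟶ P)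
    (p : P ⟶ K) (hi : Function.Injective i) (hp : Function.Surjective p) (hip : Function.Exact i p)
    (hK : IsSyzygy R n K X) (h : extZero R (n+1) X (ModuleCat.of R R)) : ExtProp i.hom := by
  apply extProp_of
  intro g
  obtain ⟨g', hg'⟩ := ext_extend i p hi hp hip (ext_shift n 0 K X hK (ext_bridge h))
    (ModuleCat.ofHom g : W ⟶ ModuleCat.of R R)
  exact ⟨g'.hom, congrArg ModuleCat.Hom.hom hg'⟩

theorem homZero {R : Type u} [CommRing R] {X : ModuleCat.{u} R}
    (h : extZero R 0 X (ModuleCat.of R R)) (g : X →ₗ[R] R) : g = 0 := by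
  have := ext_bridge h
  have h2 : (ModuleCat.ofHom g : X ⟶ ModuleCat.of R R) = 0 :=
    (Abelian.Ext.mk₀_bijective _ _).1 (Subsingleton.elim _ _)
  exact congrArg ModuleCat.Hom.hom h2

theorem ringHom_syz {R : Type u} [CommRing R] (X : ModuleCat.{u} R) (n : ℕ) :
    ∀ (W : ModuleCat.{u} R), IsSyzygy R n W X →
    (∀ i ≤ n, extZero R i X (ModuleCat.of R R)) →
    ∃ φ : Module.End R W →+* Module.End R X, Function.Surjective φ ∧ ∀ f, φ f = 0 ↔ FP f := by
  induction n with
  | zero =>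
    rintro W ⟨e⟩ h
    let E := e.toLinearEquiv
    refine ⟨(E.conjRingEquiv : Module.End R W ≃+* Module.End R X), E.conjRingEquiv.surjective, ?_⟩
    intro f
    have : (E.conjRingEquiv : Module.End R W →+* Module.End R X) f = 0 ↔ f = 0 :=
      E.conjRingEquiv.map_eq_zero_iff
    rw [this]
    constructor
    · rintro rfl; exact FP.zero
    · rintro ⟨P, _, _, _, _, a, b, rfl⟩
      have h0 : a = 0 := by
        have := homZero_of (homZero (h 0 le_rfl)) (a.comp E.symm.toLinearMap)
        ext x
        simpa using LinearMap.congr_fun this (E x)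
      rw [h0, LinearMap.comp_zero]
  | succ n ih =>
    rintro W ⟨P, K, i, p, hP, hPf, hi, hp, hip, hK⟩ h
    obtain ⟨ψ, h1, h2⟩ := ih K hK (fun i hi => h i (by omega))
    have : Module.Projective R P := (IsProjective.iff_projective _).2 hP
    exact ring_step (i := i.hom) (p := p.hom) hi hp hip
      (extProp_syz i p hi hp hip hK (h _ le_rfl)) ψ h1 h2

theorem maps_FP {R : Type u} [CommRing R] (X N : ModuleCat.{u} R) (n : ℕ) :
    ∀ (d : ℕ) (_ : n < d) (W M : ModuleCat.{u} R), IsSyzygy R n W X → IsSyzygy R d M N →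
    (∀ i ≤ n, extZero R i X (ModuleCat.of R R)) → ∀ f : W →ₗ[R] M, FP f := by
  induction n with
  | zero =>
    rintro d hd W M ⟨e⟩ hM h f
    obtain ⟨d, rfl⟩ : ∃ k, d = k + 1 := ⟨d - 1, by omega⟩
    obtain ⟨Q, L, j, q, hQ, hQf, hj, hq, hjq, hL⟩ := hM
    have : Module.Projective R Q := (IsProjective.iff_projective _).2 hQ
    have h0 : f = 0 := by
      have := homZero_of (homZero (h 0 le_rfl)) ((j.hom.comp f).comp e.toLinearEquiv.symm.toLinearMap)
      ext x
      apply hj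
      have h3 := LinearMap.congr_fun this (e.toLinearEquiv x)
      simp only [LinearMap.comp_apply, LinearEquiv.coe_coe, LinearEquiv.symm_apply_apply] at h3
      simpa using h3
    rw [h0]; exact FP.zero
  | succ n ih =>
    rintro d hd W M ⟨P, K, i, p, hP, hPf, hi, hp, hip, hK⟩ hM h f
    obtain ⟨d, rfl⟩ : ∃ k, d = k + 1 := ⟨d - 1, by omega⟩
    obtain ⟨Q, L, j, q, hQ, hQf, hj, hq, hjq, hL⟩ := hM
    have : Module.Projective R Q := (IsProjective.iff_projective _).2 hQ
    have : Module.Projective R P := (IsProjective.iff_projective _).2 hP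
    obtain ⟨g, k, h1, h2⟩ := square_ex (i := i.hom) (p := p.hom) (j := j.hom) (q := q.hom) hp hjq hip
      (extProp_syz i p hi hp hip hK (h _ le_rfl)) f
    exact square_down hj hq hjq hip h1 h2
      (ih d (by omega) K L hK hL (fun i hi => h i (by omega)) k)

section final

variable {R : Type u} [CommRing R]

theorem ideal_mem {M W : Type u} [AddCommGroup M] [AddCommGroup W] [Module R M] [Module R W]
    (I : TwoSidedIdeal (Module.End R (M × W)))
    (he : (LinearMap.inl R M W).comp (LinearMap.fst R M W) ∈ I)
    {k : ℕ} (i : R →ₗ[R] (Fin k → M)) (p : (Fin k → M) →ₗ[R] R) (hpi : p.comp i = LinearMap.id)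
    (f : W →ₗ[R] W) (hf : FP f) :
    ((LinearMap.inr R M W).comp (f.comp (LinearMap.snd R M W)) : Module.End R (M × W)) ∈ I := by
  have h1 : ∀ (α : W →ₗ[R] M) (β : M →ₗ[R] W), ((LinearMap.inr R M W).comp
      ((β.comp α).comp (LinearMap.snd R M W)) : Module.End R (M × W)) ∈ I := by
    intro α β
    have := I.mul_mem_right _
      ((LinearMap.inl R M W).comp (α.comp (LinearMap.snd R M W)) : Module.End R (M × W))
      (I.mul_mem_left
      ((LinearMap.inr R M W).comp (β.comp (LinearMap.fst R M W)) : Module.End R (M × W)) _ he)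
    convert this using 1
    apply LinearMap.ext
    rintro ⟨x, y⟩
    simp
  have hsum : ∀ {n : ℕ} (F : Fin n → (W →ₗ[R] W)),
      (∀ k, ((LinearMap.inr R M W).comp ((F k).comp (LinearMap.snd R M W)) :
        Module.End R (M × W)) ∈ I) →
      ((LinearMap.inr R M W).comp ((∑ k, F k).comp (LinearMap.snd R M W)) :
        Module.End R (M × W)) ∈ I := by
    intro n F hF
    have : ((LinearMap.inr R M W).comp ((∑ k, F k).comp (LinearMap.snd R M W)) :
        Module.End R (M × W)) =
        ∑ k, (LinearMap.inr R M W).comp ((F k).comp (LinearMap.snd R M W)) := by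
      apply LinearMap.ext
      rintro ⟨x, y⟩
      simp only [LinearMap.sum_apply, LinearMap.comp_apply, map_sum]
    rw [this]
    exact sum_mem fun k _ => hF k
  have h2 : ∀ {Z : Type u} [AddCommGroup Z] [Module R Z] {n : ℕ} (v : W →ₗ[R] (Fin n → Z))
      (u : (Fin n → Z) →ₗ[R] W), u.comp v =
        ∑ j, (u.comp (LinearMap.single R (fun _ => Z) j)).comp ((LinearMap.proj j).comp v) := by
    intro Z _ _ n v u
    ext x
    simp only [LinearMap.sum_apply, LinearMap.comp_apply, LinearMap.proj_apply]
    rw [← map_sum]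
    congr 1
    exact (LinearMap.sum_single_apply _ (v x)).symm
  have h3 : ∀ (v : W →ₗ[R] R) (u : R →ₗ[R] W), ((LinearMap.inr R M W).comp
      ((u.comp v).comp (LinearMap.snd R M W)) : Module.End R (M × W)) ∈ I := by
    intro v u
    have : u.comp v = (u.comp p).comp (i.comp v) := by
      rw [LinearMap.comp_assoc, ← LinearMap.comp_assoc v, hpi, LinearMap.id_comp]
    rw [this, h2]
    exact hsum _ fun k => h1 _ _
  obtain ⟨Q, _, _, _, _, g, h, rfl⟩ := hf
  obtain ⟨n, a, b, -, -, hab⟩ := Module.Finite.exists_comp_eq_id_of_projective R Q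
  have : h.comp g = (h.comp a).comp (b.comp g) := by
    rw [LinearMap.comp_assoc, ← LinearMap.comp_assoc g, hab, LinearMap.id_comp]
  rw [this, h2]
  exact hsum _ fun k => h3 _ _

theorem final {M W : Type u} [AddCommGroup M] [AddCommGroup W] [Module R M] [Module R W]
    {k : ℕ} (i : R →ₗ[R] (Fin k → M)) (p : (Fin k → M) →ₗ[R] R) (hpi : p.comp i = LinearMap.id)
    (hFP : ∀ f : W →ₗ[R] M, FP f) {B : Type u} [Ring B] (φ : Module.End R W →+* B)
    (hφ : Function.Surjective φ) (hker : ∀ f, φ f = 0 ↔ FP f) :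
    Nonempty
      ((TwoSidedIdeal.span
          ({(LinearMap.inl R M W).comp (LinearMap.fst R M W)} :
            Set (Module.End R (M × W)))).ringCon.Quotient ≃+* B) := by
  set I := TwoSidedIdeal.span
          ({(LinearMap.inl R M W).comp (LinearMap.fst R M W)} :
            Set (Module.End R (M × W))) with hI
  have he : ((LinearMap.inl R M W).comp (LinearMap.fst R M W) : Module.End R (M × W)) ∈ I :=
    TwoSidedIdeal.subset_span rfl
  let c : Module.End R (M × W) → Module.End R W := fun a =>
    (LinearMap.snd R M W).comp (a.comp (LinearMap.inr R M W))
  let Φ : Module.End R (M × W) →+* B :=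
    { toFun := fun a => φ (c a)
      map_one' := by
        rw [← map_one φ]; rfl
      map_zero' := by
        rw [← map_zero φ]; rfl
      map_add' := by
        intro a b
        rw [← map_add φ]; rfl
      map_mul' := by
        intro a b
        rw [← map_mul φ, ← sub_eq_zero, ← map_sub, hker]
        obtain ⟨Q, _, _, h1, h2, u, v, huv⟩ :=
          hFP ((LinearMap.fst R M W).comp (b.comp (LinearMap.inr R M W)))
        refine ⟨Q, _, _, h1, h2, u,
          ((LinearMap.snd R M W).comp (a.comp (LinearMap.inl R M W))).comp v, ?_⟩
        rw [LinearMap.comp_assoc, huv]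
        ext x
        have e : b (0, x) = ((b (0, x)).1, 0) + (0, (b (0,x)).2) := by simp
        have e2 : a (b (0, x)) = a ((b (0, x)).1, 0) + a (0, (b (0,x)).2) := by
          rw [← map_add, ← e]
        simp [c, e2] }
  have hΦ : Function.Surjective Φ := by
    intro b
    obtain ⟨f, rfl⟩ := hφ b
    refine ⟨(LinearMap.inr R M W).comp (f.comp (LinearMap.snd R M W)), ?_⟩
    change φ (c _) = φ f
    congr 1
  have hk : I = TwoSidedIdeal.ker Φ := by
    apply le_antisymm
    · rw [hI, TwoSidedIdeal.span_le]
      rintro _ rfl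
      change _ ∈ TwoSidedIdeal.ker Φ
      rw [TwoSidedIdeal.mem_ker]
      change φ (c _) = 0
      rw [← map_zero φ]
      congr 1
    · intro a ha
      rw [TwoSidedIdeal.mem_ker] at ha
      have h1 := ideal_mem I he i p hpi (c a) ((hker _).1 ha)
      set e : Module.End R (M × W) := (LinearMap.inl R M W).comp (LinearMap.fst R M W) with hedef
      have h2 : a = e * a + ((1 - e) * a * e +
        ((LinearMap.inr R M W).comp ((c a).comp (LinearMap.snd R M W)))) := by
        have : ((LinearMap.inr R M W).comp ((c a).comp (LinearMap.snd R M W)) :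
          Module.End R (M × W)) = (1 - e) * a * (1 - e) := by
          have e1 : (1 - e) = (LinearMap.inr R M W).comp (LinearMap.snd R M W) := by
            apply LinearMap.ext
            rintro ⟨x, y⟩
            simp [hedef]
          rw [e1]; rfl
        rw [this, mul_sub, mul_one, sub_mul, one_mul]; abel
      rw [h2]
      exact I.add_mem (I.mul_mem_right _ _ he) (I.add_mem (I.mul_mem_left _ _ he) h1)
  have hk2 : I.ringCon = RingCon.ker Φ := by
    rw [hk]; rfl
  exact ⟨RingEquiv.ofBijective (I.ringCon.lift Φ hk2.le) (RingCon.lift_bijective_iff.2 ⟨hk2, hΦ⟩)⟩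

end final

/-- With `A = End_R(M ⊕ Ω^c X)` and `e` the idempotent projecting onto `M`,
`A/AeA ≅ End_R(X)` as rings. -/
theorem stmt9 (R : Type u) [CommRing R] [IsNoetherianRing R] (d c : ℕ) (hcd : c < d)
    (M X : ModuleCat.{u} R) [Module.Finite R M] [Module.Finite R X]
    (hM : IsTorsionFree R d M)
    (hgen : MemAdd R M (ModuleCat.of R R))
    (hgrade : ∀ i ≤ c, extZero R i X (ModuleCat.of R R))
    (W : ModuleCat.{u} R) (hW : IsSyzygy R c W X) :
    Nonempty
      ((TwoSidedIdeal.span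
          ({(LinearMap.inl R M W).comp (LinearMap.fst R M W)} :
            Set (Module.End R (M × W)))).ringCon.Quotient
        ≃+* Module.End R X) := by
  obtain ⟨k, i, p, hpi⟩ := hgen
  obtain ⟨N, -, -, hN⟩ := hM
  obtain ⟨φ, h1, h2⟩ := ringHom_syz X c W hW hgrade
  exact final i p hpi (maps_FP X N c d hcd W M hW hN hgrade) φ h1 h2
end
end
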